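/- arXiv:1308.1155 — 5 statements merged into one kernel-verified Lean document; each statement's English description precedes it below -/
import Mathlib

section
/- Let γ : [0,∞) → (0,∞) be a positive, nondecreasing, continuous function with ∫₂^∞ dr/γ(r) = ∞, and define H(r) = ∫₁^r ds/γ(s) for r ≥ 0, so that H is a strictly increasing continuous map from [0,∞) onto [H(0),∞). Let T > 0 and let f : [0,T] → [0,∞) be continuous and satisfy f(t) ≤ f(0) + ∫₀ᵗ γ(f(r)) dr for all t ∈ [0,T]. Then f(t) ≤ H⁻¹(H(f(0)) + t) for all t ∈ [0,T]. -/
open MeasureTheory Filter Set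

/-- Differential form of Osgood's inequality: if `u` is bounded on `[0,T]` by
`F(t) = a + ∫₀ᵗ g(u)` with `g` positive and nondecreasing, then the primitive of `1/g`
grows along `F` at most linearly with slope one. -/
theorem integral_one_div_comp_le {g u : ℝ → ℝ} {a T : ℝ} (hg : Continuous g)
    (hpos : ∀ x, 0 < g x) (hmono : Monotone g) (hu : Continuous u)
    (hle : ∀ t ∈ Icc 0 T, u t ≤ a + ∫ r in (0:ℝ)..t, g (u r)) {t : ℝ} (ht : t ∈ Icc 0 T) :
    ∫ s in (1:ℝ)..(a + ∫ r in (0:ℝ)..t, g (u r)), 1 / g s ≤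
      (∫ s in (1:ℝ)..a, 1 / g s) + t := by
  have hinv : Continuous fun s => 1 / g s :=
    continuous_const.div hg fun x => (hpos x).ne'
  set F : ℝ → ℝ := fun t => a + ∫ r in (0:ℝ)..t, g (u r) with hF
  have hF' (x : ℝ) : HasDerivAt F (g (u x)) x :=
    ((hg.comp hu).integral_hasStrictDerivAt 0 x).hasDerivAt.const_add a
  have hder (x : ℝ) : HasDerivAt (fun y => (∫ s in (1:ℝ)..F y, 1 / g s) - y)
      (1 / g (F x) * g (u x) - 1) x :=
    ((hinv.integral_hasStrictDerivAt 1 (F x)).hasDerivAt.comp x (hF' x)).sub (hasDerivAt_id x)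
  have hanti : AntitoneOn (fun y => (∫ s in (1:ℝ)..F y, 1 / g s) - y) (Icc 0 T) := by
    refine antitoneOn_of_deriv_nonpos (convex_Icc 0 T)
      (fun x _ => (hder x).continuousAt.continuousWithinAt)
      (fun x _ => (hder x).differentiableAt.differentiableWithinAt) fun x hx => ?_
    rw [(hder x).deriv, one_div_mul_eq_div, sub_nonpos]
    exact (div_le_one (hpos _)).2 (hmono (hle x (interior_subset hx)))
  have h := hanti (left_mem_Icc.2 (ht.1.trans ht.2)) ht ht.1
  have hF0 : F 0 = a := by simp [hF]
  simp only [hF0, sub_zero] at h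
  linarith

/-- Osgood's lemma: if `γ` is positive, nondecreasing and continuous on `[0,∞)` with
`∫₂^∞ dr/γ(r) = ∞`, `H(r) = ∫₁^r ds/γ(s)` with inverse `Hinv` on `[H(0),∞)`, and a continuous
nonnegative `f` on `[0,T]` satisfies `f(t) ≤ f(0) + ∫₀ᵗ γ(f(r)) dr`, then
`f(t) ≤ Hinv (H (f 0) + t)`. -/
theorem stmt_0
    (γ : ℝ → ℝ)
    (hγ_pos : ∀ r ∈ Set.Ici (0:ℝ), 0 < γ r)
    (hγ_mono : MonotoneOn γ (Set.Ici (0:ℝ)))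
    (hγ_cont : ContinuousOn γ (Set.Ici (0:ℝ)))
    (hγ_div : Tendsto (fun R : ℝ => ∫ r in (2:ℝ)..R, 1 / γ r) atTop atTop)
    (H : ℝ → ℝ)
    (hH : ∀ r ∈ Set.Ici (0:ℝ), H r = ∫ s in (1:ℝ)..r, 1 / γ s)
    (Hinv : ℝ → ℝ)
    (hHinv_left : ∀ r ∈ Set.Ici (0:ℝ), Hinv (H r) = r)
    (hHinv_right : ∀ y ∈ Set.Ici (H 0), Hinv y ∈ Set.Ici (0:ℝ) ∧ H (Hinv y) = y)
    (T : ℝ) (hT : 0 < T)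
    (f : ℝ → ℝ)
    (hf_nonneg : ∀ t ∈ Set.Icc (0:ℝ) T, 0 ≤ f t)
    (hf_cont : ContinuousOn f (Set.Icc (0:ℝ) T))
    (hf_ineq : ∀ t ∈ Set.Icc (0:ℝ) T, f t ≤ f 0 + ∫ r in (0:ℝ)..t, γ (f r)) :
    ∀ t ∈ Set.Icc (0:ℝ) T, f t ≤ Hinv (H (f 0) + t) := by
  intro t ht
  set g : ℝ → ℝ := fun x => γ (max x 0) with hg_def
  set u : ℝ → ℝ := fun x => f (projIcc 0 T hT.le x) with hu_def
  have hg : Continuous g :=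
    hγ_cont.comp_continuous (by fun_prop) fun x => le_max_right x 0
  have hpos (x : ℝ) : 0 < g x := hγ_pos _ (le_max_right x 0)
  have hmono : Monotone g := fun x y hxy =>
    hγ_mono (le_max_right x 0) (le_max_right y 0) (max_le_max_right 0 hxy)
  have hu : Continuous u :=
    hf_cont.comp_continuous (by fun_prop) fun x => (projIcc 0 T hT.le x).2
  have hgγ {x : ℝ} (hx : 0 ≤ x) : g x = γ x := by simp [hg_def, hx]
  have huf {x : ℝ} (hx : x ∈ Icc 0 T) : u x = f x := by
    simp [hu_def, projIcc_of_mem hT.le hx]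
  have hinv : Continuous fun s => 1 / g s :=
    continuous_const.div hg fun x => (hpos x).ne'
  have hHg {r : ℝ} (hr : 0 ≤ r) : H r = ∫ s in (1:ℝ)..r, 1 / g s := by
    rw [hH r hr]
    refine intervalIntegral.integral_congr fun s hs => ?_
    have hs0 : 0 ≤ s := (le_min zero_le_one hr).trans hs.1
    simp only [hgγ hs0]
  have hint {x : ℝ} (hx : x ∈ Icc 0 T) :
      ∫ r in (0:ℝ)..x, γ (f r) = ∫ r in (0:ℝ)..x, g (u r) := by
    refine intervalIntegral.integral_congr fun s hs => ?_
    rw [uIcc_of_le hx.1] at hs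
    have hs' : s ∈ Icc 0 T := ⟨hs.1, hs.2.trans hx.2⟩
    simp only [huf hs', hgγ (hf_nonneg s hs')]
  have hle (x : ℝ) (hx : x ∈ Icc 0 T) : u x ≤ f 0 + ∫ r in (0:ℝ)..x, g (u r) := by
    rw [huf hx, ← hint hx]
    exact hf_ineq x hx
  have hf0 : 0 ≤ f 0 := hf_nonneg 0 (left_mem_Icc.2 hT.le)
  have hbound := integral_one_div_comp_le hg hpos hmono hu hle ht
  set F : ℝ := f 0 + ∫ r in (0:ℝ)..t, g (u r) with hF_def
  have hfF : f t ≤ F := huf ht ▸ hle t ht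
  have hF0 : 0 ≤ F := (hf_nonneg t ht).trans hfF
  rw [← hHg hF0, ← hHg hf0] at hbound
  have hH_lt {x y : ℝ} (hx : 0 ≤ x) (hxy : x < y) : H x < H y := by
    rw [hHg hx, hHg (hx.trans hxy.le), ← sub_pos,
      intervalIntegral.integral_interval_sub_left (hinv.intervalIntegrable _ _)
        (hinv.intervalIntegrable _ _)]
    exact intervalIntegral.intervalIntegral_pos_of_pos (hinv.intervalIntegrable _ _)
      (fun s => one_div_pos.2 (hpos s)) hxy
  have hH0 : H 0 ≤ H (f 0) := hf0.eq_or_lt.elim (fun h => h ▸ le_rfl) fun h => (hH_lt le_rfl h).le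
  obtain ⟨hy0, hy⟩ := hHinv_right (H (f 0) + t) (hH0.trans (le_add_of_nonneg_right ht.1))
  refine hfF.trans (not_lt.1 fun hlt => ?_)
  have := hH_lt hy0 hlt
  linarith
end

section
/- Fix a Littlewood–Paley partition as in the setup. For every s ≥ 0 there exists a constant C = C_s > 0 such that for every Schwartz function u on ℝⁿ: (1/C)·∫_{ℝⁿ}(1+|ξ|²)^s |𝓕u(ξ)|² dξ ≤ ∑_{j=−1}^∞ 2^{2js} ‖Δⱼu‖_{L²}² ≤ C·∫_{ℝⁿ}(1+|ξ|²)^s |𝓕u(ξ)|² dξ. -/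
open MeasureTheory FourierTransform Function
open scoped ENNReal NNReal SchwartzMap

/-- The Littlewood–Paley block `Δⱼf = 𝓕⁻¹(φ(2⁻ʲ·)·𝓕f)` for `j ≥ 0`. -/
noncomputable def deltaJ {n : ℕ} (φ : EuclideanSpace ℝ (Fin n) → ℝ)
    (f : EuclideanSpace ℝ (Fin n) → ℂ) (j : ℕ) : EuclideanSpace ℝ (Fin n) → ℂ :=
  𝓕⁻ fun ξ => (φ ((2:ℝ) ^ (-(j:ℤ)) • ξ) : ℂ) * 𝓕 f ξ

/-- The low-frequency Littlewood–Paley block `Δ₋₁f = 𝓕⁻¹(χ·𝓕f)`. -/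
noncomputable def deltaNeg {n : ℕ} (χ : EuclideanSpace ℝ (Fin n) → ℝ)
    (f : EuclideanSpace ℝ (Fin n) → ℂ) : EuclideanSpace ℝ (Fin n) → ℂ :=
  𝓕⁻ fun ξ => (χ ξ : ℂ) * 𝓕 f ξ

/-- Plancherel's identity for a smooth, compactly supported Fourier multiplier. -/
theorem sq_eLpNorm_fourierInv_mul {n : ℕ} {m : EuclideanSpace ℝ (Fin n) → ℝ}
    (hm : ContDiff ℝ (⊤ : ℕ∞) m) (hc : HasCompactSupport m)
    (u : 𝓢(EuclideanSpace ℝ (Fin n), ℂ)) :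
    Integrable (fun ξ => m ξ ^ 2 * ‖𝓕 (⇑u) ξ‖ ^ 2) ∧
      (eLpNorm (𝓕⁻ fun ξ => (m ξ : ℂ) * 𝓕 (⇑u) ξ) 2 volume).toReal ^ 2 =
        ∫ ξ, m ξ ^ 2 * ‖𝓕 (⇑u) ξ‖ ^ 2 := by
  have hcm : HasCompactSupport fun ξ => (m ξ : ℂ) * 𝓕 u ξ :=
    (hc.comp_left (g := ((↑) : ℝ → ℂ)) Complex.ofReal_zero).mul_right
  have hsm : ContDiff ℝ (⊤ : ℕ∞) fun ξ => (m ξ : ℂ) * 𝓕 u ξ :=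
    (Complex.ofRealCLM.contDiff.comp hm).mul (𝓕 u).smooth'
  set g : 𝓢(EuclideanSpace ℝ (Fin n), ℂ) := hcm.toSchwartzMap hsm
  have hgc : (⇑g) = fun ξ => (m ξ : ℂ) * 𝓕 (⇑u) ξ := rfl
  have hgn (ξ) : ‖g ξ‖ ^ 2 = m ξ ^ 2 * ‖𝓕 (⇑u) ξ‖ ^ 2 := by
    simp [hgc, mul_pow]
  have hint := (g.memLp 2 volume).integrable_norm_pow (p := 2) two_ne_zero
  simp_rw [hgn] at hint
  refine ⟨hint, ?_⟩
  rw [← hgc, ← SchwartzMap.fourierInv_coe, ← SchwartzMap.norm_toLp]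
  have h := SchwartzMap.norm_fourier_toL2_eq (𝓕⁻ g)
  rw [FourierTransform.fourier_fourierInv_eq] at h
  rw [← h, SchwartzMap.norm_toLp' (by simp) (by simp), ← Real.rpow_natCast, ← Real.rpow_mul
    (by positivity)]
  simp [hgn]

/-- The squared Sobolev norm of a Schwartz function is a convergent integral. -/
theorem integrable_one_add_norm_sq_rpow_mul_fourier {n : ℕ} (s : ℝ)
    (u : 𝓢(EuclideanSpace ℝ (Fin n), ℂ)) :
    Integrable fun ξ => (1 + ‖ξ‖ ^ 2) ^ s * ‖𝓕 (⇑u) ξ‖ ^ 2 := by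
  have hW := Function.hasTemperateGrowth_one_add_norm_sq_rpow (EuclideanSpace ℝ (Fin n)) (s / 2)
  have hint := ((SchwartzMap.smulLeftCLM ℂ (fun ξ : EuclideanSpace ℝ (Fin n) =>
    (1 + ‖ξ‖ ^ 2) ^ (s / 2)) (𝓕 u)).memLp 2 volume).integrable_norm_pow (p := 2) two_ne_zero
  refine hint.congr (.of_forall fun ξ => ?_)
  have h : (0 : ℝ) ≤ 1 + ‖ξ‖ ^ 2 := by positivity
  simp only [SchwartzMap.smulLeftCLM_apply_apply hW, norm_smul, mul_pow, Real.norm_eq_abs, sq_abs,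
    SchwartzMap.fourier_coe]
  rw [← Real.rpow_natCast, ← Real.rpow_mul h]
  simp

/-- A sequence whose nonzero terms have pairwise index distance at most one is supported on two
consecutive indices. -/
theorem exists_forall_notMem_pair_eq_zero {a : ℕ → ℝ}
    (ha : ∀ j k : ℕ, 1 < |(j : ℤ) - (k : ℤ)| → a j = 0 ∨ a k = 0) :
    ∃ k, ∀ j ∉ ({k, k + 1} : Finset ℕ), a j = 0 := by
  classical
  by_cases h : ∃ k, a k ≠ 0
  · refine ⟨Nat.find h, fun j hj => ?_⟩
    by_contra hne
    have hle := Nat.find_min' h hne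
    simp only [Finset.mem_insert, Finset.mem_singleton, not_or] at hj
    rcases ha j (Nat.find h) (by rw [lt_abs]; omega) with h0 | h0
    · exact hne h0
    · exact Nat.find_spec h h0
  · push Not at h
    exact ⟨0, fun j _ => h j⟩

/-- Termwise integration of a nonnegative pointwise convergent series with integrable
majorant. -/
theorem integrable_and_hasSum_integral_of_nonneg_of_le {α : Type*} [MeasurableSpace α]
    {μ : Measure α} {F : ℕ → α → ℝ} {S G : α → ℝ} (hF : ∀ j, Integrable (F j) μ)
    (hF0 : ∀ j x, 0 ≤ F j x) (hS : ∀ x, HasSum (F · x) (S x)) (hG : Integrable G μ)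
    (hSG : ∀ x, S x ≤ G x) :
    Integrable S μ ∧ HasSum (fun j => ∫ x, F j x ∂μ) (∫ x, S x ∂μ) := by
  have hSm : AEStronglyMeasurable S μ :=
    aestronglyMeasurable_of_tendsto_ae Filter.atTop
      (f := fun N x => ∑ j ∈ Finset.range N, F j x)
      (fun N => (integrable_finsetSum _ fun j _ => hF j).1)
      (.of_forall fun x => (hS x).tendsto_sum_nat)
  have hSi : Integrable S μ := hG.mono' hSm (.of_forall fun x => by
    rw [Real.norm_of_nonneg ((hS x).nonneg fun j => hF0 j x)]
    exact hSG x)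
  refine ⟨hSi, hasSum_integral_of_dominated_convergence F (fun j => (hF j).1)
    (fun j => .of_forall fun x => (Real.norm_of_nonneg (hF0 j x)).le)
    (.of_forall fun x => (hS x).summable) ?_ (.of_forall hS)⟩
  simpa only [fun x => (hS x).tsum_eq] using hSi

/-- On a dyadic annulus `2 ^ j / 2 ≤ r ≤ 2 ^ j * 2`, the dyadic and the Sobolev weights are
comparable. -/
theorem dyadic_weight_comparable {s r : ℝ} (hs : 0 ≤ s) (j : ℕ) (h₁ : 2 ^ j / 2 ≤ r)
    (h₂ : r ≤ 2 ^ j * 2) :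
    (1 + r ^ 2) ^ s ≤ 8 ^ s * (2 : ℝ) ^ (2 * (j : ℝ) * s) ∧
      (2 : ℝ) ^ (2 * (j : ℝ) * s) ≤ 4 ^ s * (1 + r ^ 2) ^ s := by
  have hj : (1 : ℝ) ≤ 2 ^ j := one_le_pow₀ (by norm_num)
  have hr : 0 ≤ r := le_trans (by positivity) h₁
  have e : (2 : ℝ) ^ (2 * (j : ℝ) * s) = ((2 ^ j) ^ 2) ^ s := by
    rw [Real.rpow_mul (by norm_num), mul_comm, Real.rpow_mul (by norm_num), Real.rpow_natCast]
    norm_num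
  rw [e, ← Real.mul_rpow (by norm_num) (by positivity),
    ← Real.mul_rpow (by norm_num) (by positivity)]
  constructor <;> refine Real.rpow_le_rpow (by positivity) ?_ hs <;> nlinarith

/-- Pointwise comparability of the Littlewood–Paley square sum with the Sobolev weight, for the
values `x` and `a j` of the partition at a point of norm `r`. -/
theorem littlewoodPaley_weight_comparable {s r x B : ℝ} {a : ℕ → ℝ} (hs : 0 ≤ s) (hr : 0 ≤ r)
    (hx : x ≠ 0 → r ≤ 1) (ha : ∀ j, a j ≠ 0 → 2 ^ j / 2 ≤ r ∧ r ≤ 2 ^ j * 2)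
    (hxB : x ^ 2 ≤ B) (haB : ∀ j, a j ^ 2 ≤ B) (hsum : x + ∑' j, a j = 1)
    (hdisj : ∀ j k : ℕ, 1 < |(j : ℤ) - (k : ℤ)| → a j = 0 ∨ a k = 0) :
    ∃ T, HasSum (fun j : ℕ => (2 : ℝ) ^ (2 * (j : ℝ) * s) * a j ^ 2) T ∧
      (1 + r ^ 2) ^ s ≤ 3 * 8 ^ s * (1 + B) * ((2 : ℝ) ^ (-(2 : ℝ) * s) * x ^ 2 + T) ∧
      (2 : ℝ) ^ (-(2 : ℝ) * s) * x ^ 2 + T ≤ 3 * 8 ^ s * (1 + B) * (1 + r ^ 2) ^ s := by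
  obtain ⟨k, hk⟩ := exists_forall_notMem_pair_eq_zero hdisj
  have hB : 0 ≤ B := (sq_nonneg x).trans hxB
  set W := (1 + r ^ 2) ^ s
  have hW1 : 1 ≤ W := Real.one_le_rpow (by nlinarith) hs
  have h48 : (4 : ℝ) ^ s ≤ 8 ^ s := Real.rpow_le_rpow (by norm_num) (by norm_num) hs
  have h8 : (1 : ℝ) ≤ 8 ^ s := Real.one_le_rpow (by norm_num) hs
  set w : ℕ → ℝ := fun j => (2 : ℝ) ^ (2 * (j : ℝ) * s)
  set w₀ := (2 : ℝ) ^ (-(2 : ℝ) * s) with hw₀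
  have hw₀1 : w₀ ≤ 1 := Real.rpow_le_one_of_one_le_of_nonpos (by norm_num) (by linarith)
  have hlow : W * x ^ 2 ≤ 8 ^ s * (w₀ * x ^ 2) := by
    by_cases h : x = 0
    · simp [h]
    · have e : 8 ^ s * w₀ = 2 ^ s := by
        rw [hw₀, Real.rpow_mul (by norm_num), ← Real.mul_rpow (by norm_num) (by positivity)]
        congr 1
        norm_num [Real.rpow_neg]
      rw [← mul_assoc, e]
      refine mul_le_mul_of_nonneg_right (Real.rpow_le_rpow (by positivity) ?_ hs) (sq_nonneg x)
      nlinarith [hx h]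
  have hupp : w₀ * x ^ 2 ≤ 8 ^ s * (W * B) := by
    have h1 : w₀ * x ^ 2 ≤ 1 * B := mul_le_mul hw₀1 hxB (sq_nonneg x) zero_le_one
    have h2 : B ≤ W * B := le_mul_of_one_le_left hB hW1
    have h3 : W * B ≤ 8 ^ s * (W * B) := le_mul_of_one_le_left (by positivity) h8
    linarith
  have hblock (j : ℕ) : W * a j ^ 2 ≤ 8 ^ s * (w j * a j ^ 2) ∧
      w j * a j ^ 2 ≤ 8 ^ s * (W * B) := by
    by_cases h : a j = 0
    · simp only [h]
      norm_num
      positivity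
    · obtain ⟨h1, h2⟩ := dyadic_weight_comparable hs j (ha j h).1 (ha j h).2
      constructor
      · rw [← mul_assoc]
        exact mul_le_mul_of_nonneg_right h1 (sq_nonneg _)
      · rw [← mul_assoc]
        refine mul_le_mul (h2.trans ?_) (haB j) (sq_nonneg _) (by positivity)
        exact mul_le_mul_of_nonneg_right h48 (by positivity)
  have hsum' : x + (a k + a (k + 1)) = 1 := by
    rw [← hsum, tsum_eq_sum hk, Finset.sum_pair (by simp)]
  have hT := hasSum_sum_of_ne_finset_zero (f := fun j => w j * a j ^ 2)
    (L := .unconditional ℕ)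
    (s := ({k, k + 1} : Finset ℕ)) (fun j hj => by simp [hk j hj])
  rw [Finset.sum_pair (by simp)] at hT
  refine ⟨_, hT, ?_, ?_⟩
  · have hone : 1 ≤ 3 * (x ^ 2 + a k ^ 2 + a (k + 1) ^ 2) := by
      nlinarith [sq_nonneg (x - a k), sq_nonneg (x - a (k + 1)), sq_nonneg (a k - a (k + 1))]
    set Q := w₀ * x ^ 2 + (w k * a k ^ 2 + w (k + 1) * a (k + 1) ^ 2) with hQ
    have hQ0 : 0 ≤ Q := by positivity
    calc W ≤ W * (3 * (x ^ 2 + a k ^ 2 + a (k + 1) ^ 2)) :=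
          le_mul_of_one_le_right (by positivity) hone
      _ ≤ 3 * 8 ^ s * Q := by
          rw [hQ]
          linarith [(hblock k).1, (hblock (k + 1)).1]
      _ ≤ 3 * 8 ^ s * (1 + B) * Q := by
          refine mul_le_mul_of_nonneg_right (le_mul_of_one_le_right (by positivity) ?_) hQ0
          linarith
  · have : 0 ≤ 8 ^ s * W := by positivity
    linarith [(hblock k).2, (hblock (k + 1)).2]

/-- Littlewood–Paley characterization of the Sobolev `H^s` norm: for each `s ≥ 0` there is
`C = C_s > 0` with `C⁻¹‖u‖_{H^s}² ≤ ∑_{j=−1}^∞ 2^{2js}‖Δⱼu‖_{L²}² ≤ C‖u‖_{H^s}²` for every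
Schwartz `u`. -/
theorem stmt_3 (n : ℕ) (hn : 1 ≤ n)
    (φ χ : EuclideanSpace ℝ (Fin n) → ℝ)
    (hφ_sm : ContDiff ℝ (⊤ : ℕ∞) φ) (hχ_sm : ContDiff ℝ (⊤ : ℕ∞) χ)
    (hφ_rad : ∃ h : ℝ → ℝ, ∀ ξ, φ ξ = h ‖ξ‖)
    (hχ_rad : ∃ h : ℝ → ℝ, ∀ ξ, χ ξ = h ‖ξ‖)
    (hφ_supp : Function.support φ ⊆ {ξ : EuclideanSpace ℝ (Fin n) | 1/2 ≤ ‖ξ‖ ∧ ‖ξ‖ ≤ 2})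
    (hχ_supp : Function.support χ ⊆ {ξ : EuclideanSpace ℝ (Fin n) | ‖ξ‖ ≤ 1})
    (h_sum : ∀ ξ, χ ξ + ∑' j : ℕ, φ ((2:ℝ) ^ (-(j:ℤ)) • ξ) = 1)
    (h_disj : ∀ j k : ℕ, 1 < |(j:ℤ) - (k:ℤ)| →
      Disjoint (Function.support fun ξ => φ ((2:ℝ) ^ (-(j:ℤ)) • ξ))
        (Function.support fun ξ => φ ((2:ℝ) ^ (-(k:ℤ)) • ξ)))
    (s : ℝ) (hs : 0 ≤ s) :
    ∃ C > (0:ℝ), ∀ u : 𝓢(EuclideanSpace ℝ (Fin n), ℂ),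
      (1 / C) * (∫ ξ, (1 + ‖ξ‖ ^ 2) ^ s * ‖𝓕 (⇑u) ξ‖ ^ 2) ≤
          (2:ℝ) ^ (-(2:ℝ) * s) * ((eLpNorm (deltaNeg χ ⇑u) 2 volume).toReal) ^ 2 +
            ∑' j : ℕ, (2:ℝ) ^ (2 * (j:ℝ) * s) * ((eLpNorm (deltaJ φ ⇑u j) 2 volume).toReal) ^ 2 ∧
        (2:ℝ) ^ (-(2:ℝ) * s) * ((eLpNorm (deltaNeg χ ⇑u) 2 volume).toReal) ^ 2 +
            ∑' j : ℕ, (2:ℝ) ^ (2 * (j:ℝ) * s) * ((eLpNorm (deltaJ φ ⇑u j) 2 volume).toReal) ^ 2 ≤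
          C * ∫ ξ, (1 + ‖ξ‖ ^ 2) ^ s * ‖𝓕 (⇑u) ξ‖ ^ 2 := by
  have hχc : HasCompactSupport χ := HasCompactSupport.of_support_subset_isCompact
    (isCompact_closedBall 0 1) fun ξ hξ => by simpa using hχ_supp hξ
  have hφc : HasCompactSupport φ := HasCompactSupport.of_support_subset_isCompact
    (isCompact_closedBall 0 2) fun ξ hξ => by simpa using (hφ_supp hξ).2
  obtain ⟨B₁, hB₁⟩ := hχc.exists_bound_of_continuous hχ_sm.continuous
  obtain ⟨B₂, hB₂⟩ := hφc.exists_bound_of_continuous hφ_sm.continuous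
  set B := max (B₁ ^ 2) (B₂ ^ 2)
  have hχB (ξ) : χ ξ ^ 2 ≤ B := by
    refine le_trans ?_ (le_max_left _ _)
    rw [← sq_abs]
    exact pow_le_pow_left₀ (abs_nonneg _) (hB₁ ξ) 2
  have hφB (ξ) : φ ξ ^ 2 ≤ B := by
    refine le_trans ?_ (le_max_right _ _)
    rw [← sq_abs]
    exact pow_le_pow_left₀ (abs_nonneg _) (hB₂ ξ) 2
  have hann (ξ : EuclideanSpace ℝ (Fin n)) (j : ℕ) (h : φ ((2:ℝ) ^ (-(j:ℤ)) • ξ) ≠ 0) :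
      2 ^ j / 2 ≤ ‖ξ‖ ∧ ‖ξ‖ ≤ 2 ^ j * 2 := by
    have hmem := hφ_supp h
    have h2 : (0:ℝ) < 2 ^ j := by positivity
    simp only [Set.mem_ofPred_eq, norm_smul, zpow_neg, zpow_natCast, norm_inv, norm_pow,
      Real.norm_ofNat, inv_mul_eq_div, le_div_iff₀ h2, div_le_iff₀ h2] at hmem
    constructor <;> linarith [hmem.1, hmem.2]
  choose T hT hlow hupp using fun ξ : EuclideanSpace ℝ (Fin n) =>
    littlewoodPaley_weight_comparable hs (norm_nonneg ξ) (fun h => hχ_supp h) (hann ξ) (hχB ξ)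
      (fun j => hφB _) (h_sum ξ) fun j k hjk => by
        by_contra! h
        exact Set.disjoint_left.1 (h_disj j k hjk) h.1 h.2
  have hB0 : 0 ≤ B := (sq_nonneg _).trans (le_max_left _ _)
  set C := 3 * 8 ^ s * (1 + B)
  have hC0 : 0 < C := by positivity
  refine ⟨C, hC0, fun u => ?_⟩
  have hφj (j : ℕ) := sq_eLpNorm_fourierInv_mul (m := fun ξ => φ ((2:ℝ) ^ (-(j:ℤ)) • ξ))
    (hφ_sm.comp (contDiff_const_smul _)) (hφc.comp_smul (by positivity)) u
  obtain ⟨hχi, hχe⟩ := sq_eLpNorm_fourierInv_mul hχ_sm hχc u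
  have hWi := integrable_one_add_norm_sq_rpow_mul_fourier s u
  have hlow' (ξ : EuclideanSpace ℝ (Fin n)) := mul_le_mul_of_nonneg_right (hlow ξ)
    (sq_nonneg ‖𝓕 (⇑u) ξ‖)
  have hupp' (ξ : EuclideanSpace ℝ (Fin n)) := mul_le_mul_of_nonneg_right (hupp ξ)
    (sq_nonneg ‖𝓕 (⇑u) ξ‖)
  obtain ⟨hSi, hSsum⟩ := integrable_and_hasSum_integral_of_nonneg_of_le
    (F := fun (j : ℕ) ξ => (2:ℝ) ^ (2 * (j:ℝ) * s) *
      (φ ((2:ℝ) ^ (-(j:ℤ)) • ξ) ^ 2 * ‖𝓕 (⇑u) ξ‖ ^ 2))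
    (S := fun ξ => T ξ * ‖𝓕 (⇑u) ξ‖ ^ 2)
    (fun j => (hφj j).1.const_mul _) (fun j ξ => by positivity)
    (fun ξ => by simpa only [mul_assoc] using (hT ξ).mul_right (‖𝓕 (⇑u) ξ‖ ^ 2))
    (hWi.const_mul C) fun ξ => by
      have : 0 ≤ (2:ℝ) ^ (-(2:ℝ) * s) * χ ξ ^ 2 * ‖𝓕 (⇑u) ξ‖ ^ 2 := by positivity
      linarith [hupp' ξ]
  have hkey : (2:ℝ) ^ (-(2:ℝ) * s) * ((eLpNorm (deltaNeg χ ⇑u) 2 volume).toReal) ^ 2 +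
      ∑' j : ℕ, (2:ℝ) ^ (2 * (j:ℝ) * s) * ((eLpNorm (deltaJ φ ⇑u j) 2 volume).toReal) ^ 2 =
      ∫ ξ, ((2:ℝ) ^ (-(2:ℝ) * s) * (χ ξ ^ 2 * ‖𝓕 (⇑u) ξ‖ ^ 2) + T ξ * ‖𝓕 (⇑u) ξ‖ ^ 2) := by
    rw [integral_add (hχi.const_mul _) hSi, integral_const_mul, ← hSsum.tsum_eq]
    simp_rw [integral_const_mul]
    simp only [deltaNeg, deltaJ, hχe, fun j => (hφj j).2]
  have hQi := (hχi.const_mul ((2:ℝ) ^ (-(2:ℝ) * s))).add hSi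
  rw [hkey, one_div, inv_mul_le_iff₀ hC0, ← integral_const_mul, ← integral_const_mul]
  constructor
  · exact integral_mono hWi (hQi.const_mul C) fun ξ => by
      simpa [mul_add, add_mul, mul_assoc] using hlow' ξ
  · exact integral_mono hQi (hWi.const_mul C) fun ξ => by
      simpa [mul_add, add_mul, mul_assoc] using hupp' ξ
end

section
/- Fix a Littlewood–Paley partition as in the setup, and let 0 < s < 1. There exists a constant C = C_s > 0 such that for every bounded continuous function u : ℝⁿ → ℂ: (i) sup_{j≥−1} 2^{js}‖Δⱼu‖_{L^∞} ≤ C·|u|_{C^s} whenever |u|_{C^s} < ∞, and (ii) if sup_{j≥−1} 2^{js}‖Δⱼu‖_{L^∞} < ∞ then |u|_{C^s} ≤ C·sup_{j≥−1} 2^{js}‖Δⱼu‖_{L^∞}. -/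
open MeasureTheory FourierTransform Function
open scoped ENNReal NNReal

/-- The Littlewood–Paley convolution kernels `ψ₋₁ = 𝓕⁻¹χ` and `ψⱼ = 𝓕⁻¹(φ(2⁻ʲ·))`, `j ≥ 0`. -/
noncomputable def lpKernel {n : ℕ} (χ φ : EuclideanSpace ℝ (Fin n) → ℝ) (j : ℤ) :
    EuclideanSpace ℝ (Fin n) → ℂ :=
  if j = -1 then 𝓕⁻ fun ξ => (χ ξ : ℂ) else 𝓕⁻ fun ξ => (φ ((2:ℝ) ^ (-j) • ξ) : ℂ)

/-- The Littlewood–Paley block `Δⱼu = ψⱼ * u`, acting on bounded continuous functions. -/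
noncomputable def lpBlock {n : ℕ} (χ φ : EuclideanSpace ℝ (Fin n) → ℝ) (j : ℤ)
    (u : EuclideanSpace ℝ (Fin n) → ℂ) : EuclideanSpace ℝ (Fin n) → ℂ :=
  MeasureTheory.convolution (lpKernel χ φ j) u (ContinuousLinearMap.mul ℝ ℂ) volume

/-- The Hölder norm `|u|_{C^s} = ‖u‖_{L^∞} + sup_{x≠y} |u(x)−u(y)|/|x−y|^s`, valued in `ℝ≥0∞`. -/
noncomputable def holderNorm {n : ℕ} (s : ℝ) (u : EuclideanSpace ℝ (Fin n) → ℂ) : ℝ≥0∞ :=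
  eLpNorm u ⊤ volume +
    ⨆ (x : EuclideanSpace ℝ (Fin n)) (y : EuclideanSpace ℝ (Fin n)) (_ : x ≠ y),
      (‖u x - u y‖₊ : ℝ≥0∞) / edist x y ^ s

open Filter Topology Convolution SchwartzMap Module

section LittlewoodPaley

variable {V : Type*} [NormedAddCommGroup V] [InnerProductSpace ℝ V]

/-- The dilation `ξ ↦ a (c⁻¹ ξ)` of a Schwartz function. -/
noncomputable def SchwartzMap.dilate (a : 𝓢(V, ℂ)) {c : ℝ} (hc : 0 < c) : 𝓢(V, ℂ) :=
  compCLMOfContinuousLinearEquiv ℂ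
    (ContinuousLinearEquiv.smulLeft (Units.mk0 c⁻¹ (inv_pos.2 hc).ne') : V ≃L[ℝ] V) a

theorem SchwartzMap.dilate_apply (a : 𝓢(V, ℂ)) {c : ℝ} (hc : 0 < c) (ξ : V) :
    a.dilate hc ξ = a (c⁻¹ • ξ) := rfl

variable [FiniteDimensional ℝ V] [MeasurableSpace V] [BorelSpace V]

/-- The inverse Fourier transform of a dilated symbol is the `L¹`-normalized dilated kernel. -/
theorem fourierInv_comp_inv_smul (f : V → ℂ) {c : ℝ} (hc : 0 < c) (x : V) :
    𝓕⁻ (fun ξ => f (c⁻¹ • ξ)) x = (c ^ finrank ℝ V : ℝ) • 𝓕⁻ f (c • x) := by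
  rw [Real.fourierInv_eq, Real.fourierInv_eq]
  have h := Measure.integral_comp_inv_smul (volume : Measure V)
    (fun v => Real.fourierChar (inner ℝ v (c • x)) • f v) c
  rw [abs_of_pos (by positivity)] at h
  rw [← h]
  refine integral_congr_ae (.of_forall fun v => ?_)
  simp only [inner_smul_left, inner_smul_right]
  congr 3
  simp
  field_simp

/-- Dilation invariance of `L¹`-normalized integrals. -/
theorem integral_pow_mul_comp_smul (g : V → ℝ) {c : ℝ} (hc : 0 < c) :
    ∫ x, c ^ finrank ℝ V * g (c • x) = ∫ x, g x := by
  rw [integral_const_mul, Measure.integral_comp_smul, abs_of_pos (by positivity), smul_eq_mul,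
    ← mul_assoc, mul_inv_cancel₀ (by positivity), one_mul]

/-- Translations of a Schwartz function are Lipschitz in `L¹`. -/
theorem SchwartzMap.exists_integral_norm_translate_sub_le (f : 𝓢(V, ℂ)) :
    ∃ A : ℝ, 0 ≤ A ∧ ∀ h : V, ∫ z, ‖f (z + h) - f z‖ ≤ A * ‖h‖ := by
  obtain ⟨A, hA0, hA⟩ : ∃ A : ℝ, 0 ≤ A ∧ ∀ h : V, ‖h‖ ≤ 1 →
      ∫ z, ‖f (z + h) - f z‖ ≤ A * ‖h‖ := by
    set p := (volume : Measure V).integrablePower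
    set g := fderivCLM ℝ V ℂ f
    have hg : ∀ x, ‖g x‖ * (1 + ‖x‖) ^ p ≤
        2 ^ p * (Finset.Iic (p, 0)).sup (fun m => SchwartzMap.seminorm ℝ m.1 m.2) g := by
      intro x
      have := one_add_le_sup_seminorm_apply (𝕜 := ℝ) (m := (p, 0)) (k := p) (n := 0) le_rfl
        le_rfl g x
      simpa [mul_comm] using this
    set S := 2 ^ p * (Finset.Iic (p, 0)).sup (fun m => SchwartzMap.seminorm ℝ m.1 m.2) g
    have hS : 0 ≤ S := le_trans (by positivity) (hg 0)
    have hintegrable : Integrable (fun z : V => (1 + ‖z‖) ^ (-(p : ℝ))) :=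
      Measure.integrable_pow_neg_integrablePower _
    refine ⟨S * 2 ^ p * ∫ z : V, (1 + ‖z‖) ^ (-(p : ℝ)), ?_, fun h hh => ?_⟩
    · exact mul_nonneg (by positivity) (integral_nonneg fun z => by positivity)
    have key : ∀ z, ‖f (z + h) - f z‖ ≤ (S * 2 ^ p * ‖h‖) * (1 + ‖z‖) ^ (-(p : ℝ)) := by
      intro z
      have hb : ∀ w ∈ Metric.closedBall z 1,
          ‖fderiv ℝ f w‖ ≤ S * 2 ^ p * (1 + ‖z‖) ^ (-(p : ℝ)) := by
        intro w hw
        have h1 : ‖z‖ ≤ ‖w‖ + 1 := by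
          have := norm_sub_norm_le z w
          rw [Metric.mem_closedBall, dist_comm, dist_eq_norm] at hw
          linarith
        have h2 : (1 + ‖z‖) ^ p ≤ 2 ^ p * (1 + ‖w‖) ^ p := by
          rw [← mul_pow]
          gcongr
          linarith [norm_nonneg w]
        rw [Real.rpow_neg (by positivity), Real.rpow_natCast, ← div_eq_mul_inv,
          le_div_iff₀ (by positivity)]
        calc ‖fderiv ℝ f w‖ * (1 + ‖z‖) ^ p ≤ ‖g w‖ * (2 ^ p * (1 + ‖w‖) ^ p) := by
              gcongr; exact le_rfl
          _ = (‖g w‖ * (1 + ‖w‖) ^ p) * 2 ^ p := by ring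
          _ ≤ S * 2 ^ p := by gcongr; exact hg w
      have := (convex_closedBall z 1).norm_image_sub_le_of_norm_fderiv_le (𝕜 := ℝ) (f := f)
        (x := z) (y := z + h) (fun w _ => f.differentiableAt) hb (by simp) (by simpa using hh)
      simp only [add_sub_cancel_left] at this
      linarith
    calc ∫ z, ‖f (z + h) - f z‖ ≤ ∫ z : V, (S * 2 ^ p * ‖h‖) * (1 + ‖z‖) ^ (-(p : ℝ)) :=
          integral_mono_of_nonneg (.of_forall fun _ => norm_nonneg _) (hintegrable.const_mul _)
            (.of_forall key)
      _ = _ := by rw [integral_const_mul]; ring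
  refine ⟨max A (2 * ∫ z, ‖f z‖), le_max_of_le_left hA0, fun h => ?_⟩
  rcases le_total ‖h‖ 1 with hh | hh
  · exact (hA h hh).trans (by gcongr; exact le_max_left _ _)
  have hi : Integrable (fun z => ‖f z‖) := f.integrable.norm
  have hI : 0 ≤ ∫ z, ‖f z‖ := integral_nonneg fun z => norm_nonneg _
  calc ∫ z, ‖f (z + h) - f z‖ ≤ ∫ z, (‖f (z + h)‖ + ‖f z‖) :=
        integral_mono_of_nonneg (.of_forall fun _ => norm_nonneg _)
          ((hi.comp_add_right h).add hi) (.of_forall fun z => norm_sub_le _ _)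
    _ = 2 * ∫ z, ‖f z‖ := by
        rw [integral_add (hi.comp_add_right h) hi, integral_add_right_eq_self (fun z => ‖f z‖)]
        ring
    _ ≤ (2 * ∫ z, ‖f z‖) * ‖h‖ := le_mul_of_one_le_right (by positivity) hh
    _ ≤ _ := by gcongr; exact le_max_right _ _

/-- `L¹`-`L^∞` bound for convolutions. -/
theorem norm_convolution_le_of_ae_bound {k f : V → ℂ} (hk : Integrable k) {M : ℝ}
    (hM : ∀ᵐ x, ‖f x‖ ≤ M) (x : V) :
    ‖(k ⋆[ContinuousLinearMap.mul ℝ ℂ] f) x‖ ≤ M * ∫ z, ‖k z‖ := by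
  rw [convolution_def, ← integral_const_mul]
  refine norm_integral_le_of_norm_le (hk.norm.const_mul M) ?_
  filter_upwards [(quasiMeasurePreserving_sub_left_of_right_invariant volume x).ae hM] with t ht
  simp only [ContinuousLinearMap.mul_apply', norm_mul]
  rw [mul_comm]
  gcongr

theorem convolutionExistsAt_of_ae_bound {k f : V → ℂ} (hk : Integrable k)
    (hf : AEStronglyMeasurable f volume) {M : ℝ} (hM : ∀ᵐ x, ‖f x‖ ≤ M) (x : V) :
    ConvolutionExistsAt k f x (ContinuousLinearMap.mul ℝ ℂ) volume := by
  refine (hk.norm.const_mul M).mono'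
    (hk.aestronglyMeasurable.convolution_integrand_snd _ hf x) ?_
  filter_upwards [(quasiMeasurePreserving_sub_left_of_right_invariant volume x).ae hM] with t ht
  simp only [ContinuousLinearMap.mul_apply', norm_mul]
  rw [mul_comm]
  gcongr

theorem norm_convolution_sub_le_of_ae_bound {k f : V → ℂ} (hk : Integrable k)
    (hf : AEStronglyMeasurable f volume) {M : ℝ} (hM : ∀ᵐ x, ‖f x‖ ≤ M) (x y : V) :
    ‖(k ⋆[ContinuousLinearMap.mul ℝ ℂ] f) x - (k ⋆[ContinuousLinearMap.mul ℝ ℂ] f) y‖ ≤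
      M * ∫ z, ‖k (z + (x - y)) - k z‖ := by
  have hx := (convolutionExistsAt_of_ae_bound hk hf hM x).integrable_swap
  have hy := (convolutionExistsAt_of_ae_bound hk hf hM y).integrable_swap
  have hsub := integral_sub_left_eq_self (fun z => ‖k (z + (x - y)) - k z‖) volume y
  rw [convolution_eq_swap, convolution_eq_swap, ← integral_sub hx hy, ← hsub, ← integral_const_mul]
  have hi : Integrable (fun z => ‖k (z + (x - y)) - k z‖) :=
    ((hk.comp_add_right (x - y)).sub hk).norm
  refine norm_integral_le_of_norm_le ((hi.comp_sub_left y).const_mul M) ?_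
  filter_upwards [hM] with t ht
  simp only [ContinuousLinearMap.mul_apply', ← sub_mul, norm_mul]
  rw [mul_comm, show y - t + (x - y) = x - t by abel]
  gcongr

theorem SchwartzMap.fourierInv_dilate_apply (a : 𝓢(V, ℂ)) {c : ℝ} (hc : 0 < c) (x : V) :
    𝓕⁻ (a.dilate hc) x = (c ^ finrank ℝ V : ℝ) • 𝓕⁻ a (c • x) := by
  rw [fourierInv_coe, fourierInv_coe]
  exact fourierInv_comp_inv_smul a hc x

theorem SchwartzMap.integral_norm_fourierInv_dilate (a : 𝓢(V, ℂ)) {c : ℝ} (hc : 0 < c) :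
    ∫ z, ‖𝓕⁻ (a.dilate hc) z‖ = ∫ z, ‖𝓕⁻ a z‖ := by
  rw [← integral_pow_mul_comp_smul (fun z => ‖𝓕⁻ a z‖) hc]
  refine integral_congr_ae (.of_forall fun z => ?_)
  simp only [fourierInv_dilate_apply, norm_smul, Real.norm_eq_abs]
  rw [abs_of_pos (by positivity)]

theorem SchwartzMap.exists_integral_norm_fourierInv_dilate_translate_sub_le (a : 𝓢(V, ℂ)) :
    ∃ A : ℝ, 0 ≤ A ∧ ∀ {c : ℝ} (hc : 0 < c) (h : V),
      ∫ z, ‖𝓕⁻ (a.dilate hc) (z + h) - 𝓕⁻ (a.dilate hc) z‖ ≤ A * c * ‖h‖ := by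
  obtain ⟨A, hA0, hA⟩ := (𝓕⁻ a).exists_integral_norm_translate_sub_le
  refine ⟨A, hA0, fun {c} hc h => ?_⟩
  calc ∫ z, ‖𝓕⁻ (a.dilate hc) (z + h) - 𝓕⁻ (a.dilate hc) z‖
      = ∫ z, c ^ finrank ℝ V * ‖𝓕⁻ a (c • z + c • h) - 𝓕⁻ a (c • z)‖ := by
        refine integral_congr_ae (.of_forall fun z => ?_)
        simp only [fourierInv_dilate_apply, ← smul_sub, norm_smul, Real.norm_eq_abs, smul_add]
        rw [abs_of_pos (by positivity)]
    _ = ∫ z, ‖𝓕⁻ a (z + c • h) - 𝓕⁻ a z‖ :=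
        integral_pow_mul_comp_smul (fun z => ‖𝓕⁻ a (z + c • h) - 𝓕⁻ a z‖) hc
    _ ≤ A * ‖c • h‖ := hA _
    _ = A * c * ‖h‖ := by rw [norm_smul, Real.norm_eq_abs, abs_of_pos hc]; ring

/-- If the symbol `a` equals `1` on the support of `b`, then convolution with `𝓕⁻ a` reproduces
`𝓕⁻ b`. -/
theorem SchwartzMap.fourierInv_convolution_fourierInv_eq (a b : 𝓢(V, ℂ))
    (hab : ∀ ξ, a ξ * b ξ = b ξ) :
    ((𝓕⁻ a : 𝓢(V, ℂ)) : V → ℂ) ⋆[ContinuousLinearMap.mul ℝ ℂ]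
      ((𝓕⁻ b : 𝓢(V, ℂ)) : V → ℂ) = 𝓕⁻ b := by
  have h : SchwartzMap.convolution (ContinuousLinearMap.mul ℂ ℂ) (𝓕⁻ a) (𝓕⁻ b) = 𝓕⁻ b := by
    refine (fourierCLE ℂ 𝓢(V, ℂ)).injective ?_
    ext ξ
    simp [fourier_convolution, hab]
  ext x
  rw [← congrArg (fun f : 𝓢(V, ℂ) => f x) h]
  exact (SchwartzMap.convolution_apply (ContinuousLinearMap.mul ℂ ℂ) (𝓕⁻ a) (𝓕⁻ b) x).symm

/-- Associativity of the convolution of two Schwartz functions and a bounded function. -/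
theorem SchwartzMap.convolution_assoc_of_bounded (f g : 𝓢(V, ℂ)) {u : V → ℂ} (hu : Continuous u)
    {B : ℝ} (hB : ∀ x, ‖u x‖ ≤ B) :
    ((f : V → ℂ) ⋆[ContinuousLinearMap.mul ℝ ℂ] (g : V → ℂ)) ⋆[ContinuousLinearMap.mul ℝ ℂ] u =
      (f : V → ℂ) ⋆[ContinuousLinearMap.mul ℝ ℂ]
        ((g : V → ℂ) ⋆[ContinuousLinearMap.mul ℝ ℂ] u) := by
  have hBdd : BddAbove (Set.range fun x => ‖‖u x‖‖) := ⟨B, by rintro _ ⟨x, rfl⟩; simpa using hB x⟩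
  have hgu : Continuous
      ((fun x => ‖g x‖) ⋆[ContinuousLinearMap.mul ℝ ℝ, volume] fun x => ‖u x‖) :=
    hBdd.continuous_convolution_right_of_integrable _ g.integrable.norm hu.norm
  have hgu_le : ∀ x, ‖((fun x => ‖g x‖) ⋆[ContinuousLinearMap.mul ℝ ℝ, volume]
      fun x => ‖u x‖) x‖ ≤ B * ∫ z, ‖g z‖ := fun x => by
    rw [convolution_def, ← integral_const_mul]
    refine norm_integral_le_of_norm_le (g.integrable.norm.const_mul B) (.of_forall fun t => ?_)
    simp only [ContinuousLinearMap.mul_apply', norm_mul, norm_norm]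
    rw [mul_comm]
    gcongr
    exact hB _
  ext x
  refine convolution_assoc _ _ _ _ (fun x y z => by simp [mul_assoc])
    f.continuous.aestronglyMeasurable g.continuous.aestronglyMeasurable hu.aestronglyMeasurable
    (.of_forall fun y => ?_) (.of_forall fun y => ?_) ?_
  · exact convolutionExistsAt_of_ae_bound f.integrable g.continuous.aestronglyMeasurable
      (.of_forall (norm_le_seminorm ℝ g)) y
  · refine BddAbove.convolutionExistsAt (s := Set.univ) _ ?_ .univ (Set.subset_univ _)
      g.integrable.norm.integrableOn hu.norm.aestronglyMeasurable
    simpa using hBdd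
  · refine BddAbove.convolutionExistsAt (s := Set.univ) _ ?_ .univ (Set.subset_univ _)
      f.integrable.norm.integrableOn hgu.aestronglyMeasurable
    exact ⟨B * ∫ z, ‖g z‖, by rintro _ ⟨x, -, rfl⟩; exact hgu_le x⟩

/-- Bernstein's inequality: a band-limited convolution is bounded pointwise by its essential
supremum, and is Lipschitz with constant proportional to its frequency. -/
theorem SchwartzMap.exists_bernstein_bound (a : 𝓢(V, ℂ)) (ha : ∀ ξ, ‖ξ‖ < 1 / 2 → a ξ = 1) :
    ∃ A : ℝ, 0 ≤ A ∧ ∀ {c : ℝ}, 0 < c → ∀ b : 𝓢(V, ℂ), (∀ ξ, b ξ ≠ 0 → ‖ξ‖ ≤ c) →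
      ∀ u : V → ℂ, Continuous u → (∃ B : ℝ, ∀ x, ‖u x‖ ≤ B) → ∀ M : ℝ,
        (∀ᵐ x, ‖(((𝓕⁻ b : 𝓢(V, ℂ)) : V → ℂ) ⋆[ContinuousLinearMap.mul ℝ ℂ] u) x‖ ≤ M) →
        (∀ x, ‖(((𝓕⁻ b : 𝓢(V, ℂ)) : V → ℂ) ⋆[ContinuousLinearMap.mul ℝ ℂ] u) x‖ ≤ A * M) ∧
        ∀ x y, ‖(((𝓕⁻ b : 𝓢(V, ℂ)) : V → ℂ) ⋆[ContinuousLinearMap.mul ℝ ℂ] u) x -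
          (((𝓕⁻ b : 𝓢(V, ℂ)) : V → ℂ) ⋆[ContinuousLinearMap.mul ℝ ℂ] u) y‖ ≤
            A * M * (c * ‖x - y‖) := by
  obtain ⟨A, hA0, hA⟩ := a.exists_integral_norm_fourierInv_dilate_translate_sub_le
  have hI : 0 ≤ ∫ z, ‖𝓕⁻ a z‖ := integral_nonneg fun z => norm_nonneg _
  refine ⟨4 * A + ∫ z, ‖𝓕⁻ a z‖, by positivity, fun {c} hc b hb u hu ⟨B, hB⟩ M hM => ?_⟩
  have hc4 : 0 < 4 * c := by positivity
  have hab : ∀ ξ, a.dilate hc4 ξ * b ξ = b ξ := fun ξ => by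
    rcases eq_or_ne (b ξ) 0 with h | h
    · simp [h]
    · rw [dilate_apply, ha, one_mul]
      rw [norm_smul, norm_inv, Real.norm_eq_abs, abs_of_pos hc4, inv_mul_lt_iff₀ hc4]
      linarith [hb ξ h]
  have hM0 : 0 ≤ M := by
    obtain ⟨x, hx⟩ := hM.exists
    exact (norm_nonneg _).trans hx
  have hrep := (𝓕⁻ (a.dilate hc4)).convolution_assoc_of_bounded (𝓕⁻ b) hu hB
  rw [fourierInv_convolution_fourierInv_eq _ _ hab] at hrep
  set k := 𝓕⁻ (a.dilate hc4)
  set f := ((𝓕⁻ b : 𝓢(V, ℂ)) : V → ℂ) ⋆[ContinuousLinearMap.mul ℝ ℂ] u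
  have hf : Continuous f := by
    refine BddAbove.continuous_convolution_right_of_integrable _ ?_ (𝓕⁻ b).integrable hu
    exact ⟨B, by rintro _ ⟨x, rfl⟩; exact hB x⟩
  rw [hrep]
  refine ⟨fun x => ?_, fun x y => ?_⟩
  · refine (norm_convolution_le_of_ae_bound k.integrable hM x).trans ?_
    rw [integral_norm_fourierInv_dilate, mul_comm]
    gcongr
    linarith
  · refine (norm_convolution_sub_le_of_ae_bound k.integrable hf.aestronglyMeasurable hM x
      y).trans ?_
    calc M * ∫ z, ‖k (z + (x - y)) - k z‖ ≤ M * (A * (4 * c) * ‖x - y‖) := by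
          gcongr; exact hA hc4 _
      _ = (4 * A) * M * (c * ‖x - y‖) := by ring
      _ ≤ _ := by gcongr; linarith

/-- Dilated kernels of total mass one are an approximate identity. -/
theorem SchwartzMap.tendsto_fourierInv_dilate_convolution (a : 𝓢(V, ℂ)) (ha : a 0 = 1)
    {u : V → ℂ} (hu : Continuous u) {B : ℝ} (hB : ∀ x, ‖u x‖ ≤ B) {c : ℕ → ℝ}
    (hc : ∀ N, 0 < c N) (hlim : Tendsto c atTop atTop) (x : V) :
    Tendsto
      (fun N => (((𝓕⁻ (a.dilate (hc N)) : 𝓢(V, ℂ)) : V → ℂ) ⋆[ContinuousLinearMap.mul ℝ ℂ] u) x)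
      atTop (𝓝 (u x)) := by
  have hmass : ∫ z, 𝓕⁻ a z = 1 := by
    have h : 𝓕 (𝓕⁻ a) 0 = 1 := by simp [ha]
    rw [← h, fourier_coe, Real.fourier_eq]
    simp
  have heq : ∀ N, (((𝓕⁻ (a.dilate (hc N)) : 𝓢(V, ℂ)) : V → ℂ) ⋆[ContinuousLinearMap.mul ℝ ℂ] u) x =
      ∫ z, 𝓕⁻ a z * u (x - (c N)⁻¹ • z) := fun N => by
    have h := Measure.integral_comp_smul (volume : Measure V)
      (fun z => 𝓕⁻ a z * u (x - (c N)⁻¹ • z)) (c N)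
    have hp : (0 : ℝ) < c N ^ finrank ℝ V := pow_pos (hc N) _
    rw [abs_of_pos (inv_pos.2 hp), eq_inv_smul_iff₀ hp.ne', ← integral_smul] at h
    rw [← h, convolution_def]
    refine integral_congr_ae (.of_forall fun z => ?_)
    simp only [fourierInv_dilate_apply, ContinuousLinearMap.mul_apply', smul_smul,
      inv_mul_cancel₀ (hc N).ne', one_smul, smul_mul_assoc]
  simp_rw [heq]
  have hux : u x = ∫ z, 𝓕⁻ a z * u x := by rw [integral_mul_const, hmass, one_mul]
  rw [hux]
  refine tendsto_integral_of_dominated_convergence (fun z => ‖𝓕⁻ a z‖ * B) (fun N => ?_)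
    ((𝓕⁻ a).integrable.norm.mul_const B) (fun N => .of_forall fun z => ?_)
    (.of_forall fun z => ?_)
  · exact ((𝓕⁻ a).continuous.mul (by fun_prop)).aestronglyMeasurable
  · rw [norm_mul]
    gcongr
    exact hB _
  · refine tendsto_const_nhds.mul ((hu.tendsto x).comp ?_)
    have := (tendsto_inv_atTop_zero.comp hlim).smul_const z
    simpa using tendsto_const_nhds (x := x).sub this

/-- A convolution kernel of vanishing mean maps `s`-Hölder functions to functions of size `c⁻ˢ` when
dilated by `c`. -/
theorem SchwartzMap.norm_fourierInv_dilate_convolution_le (b : 𝓢(V, ℂ)) (hb : b 0 = 0) {s : ℝ}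
    (hs0 : 0 < s) (hs1 : s < 1) {c : ℝ} (hc : 0 < c) {u : V → ℂ} (hu : Continuous u) {B : ℝ}
    (hB : ∀ x, ‖u x‖ ≤ B) {H : ℝ} (hH : ∀ x y, ‖u x - u y‖ ≤ H * ‖x - y‖ ^ s) (x : V) :
    ‖(((𝓕⁻ (b.dilate hc) : 𝓢(V, ℂ)) : V → ℂ) ⋆[ContinuousLinearMap.mul ℝ ℂ] u) x‖ ≤
      H * c ^ (-s) * ∫ z, ‖z‖ ^ s * ‖𝓕⁻ b z‖ := by
  set k := 𝓕⁻ (b.dilate hc)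
  have hmean : ∫ z, k z = 0 := by
    have h : 𝓕 k 0 = 0 := by simp [k, dilate_apply, hb]
    rw [fourier_coe, Real.fourier_eq] at h
    simpa using h
  have hintegrable : Integrable (fun z => ‖z‖ ^ s * ‖𝓕⁻ b z‖) := by
    refine (((𝓕⁻ b).integrable_pow_mul volume 0).add
      ((𝓕⁻ b).integrable_pow_mul volume 1)).mono' ?_ (.of_forall fun z => ?_)
    · exact (Continuous.mul (continuous_norm.rpow_const fun _ => Or.inr hs0.le)
        (𝓕⁻ b).continuous.norm).aestronglyMeasurable
    · simp only [Pi.add_apply, ← add_mul, pow_zero, pow_one]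
      rw [Real.norm_of_nonneg (by positivity)]
      gcongr
      rcases le_total ‖z‖ 1 with h | h
      · linarith [Real.rpow_le_one (norm_nonneg z) h hs0.le, norm_nonneg z]
      · linarith [Real.rpow_le_self_of_one_le h hs1.le]
  have hconv := convolutionExistsAt_of_ae_bound k.integrable hu.aestronglyMeasurable
    (.of_forall hB) x
  have heq : (k ⋆[ContinuousLinearMap.mul ℝ ℂ] u) x = ∫ z, k z * (u (x - z) - u x) := by
    have h := integral_sub hconv (k.integrable.mul_const (u x))
    rw [integral_mul_const, hmean, zero_mul, sub_zero] at h
    rw [convolution_def, ← h]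
    simp [mul_sub]
  have hpt : ∀ z, ‖k z * (u (x - z) - u x)‖ ≤
      H * c ^ (-s) * (c ^ finrank ℝ V * (‖c • z‖ ^ s * ‖𝓕⁻ b (c • z)‖)) := fun z => by
    have h1 := hH (x - z) x
    have h2 : ‖k z‖ = c ^ finrank ℝ V * ‖𝓕⁻ b (c • z)‖ := by
      simp only [k]
      rw [fourierInv_dilate_apply, norm_smul, Real.norm_of_nonneg (by positivity)]
    have h3 : c ^ (-s) * ‖c • z‖ ^ s = ‖z‖ ^ s := by
      rw [norm_smul, Real.norm_of_nonneg hc.le, Real.mul_rpow hc.le (norm_nonneg z), ← mul_assoc,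
        ← Real.rpow_add hc]
      simp
    rw [sub_sub_cancel_left, norm_neg] at h1
    rw [norm_mul, h2]
    calc _ ≤ c ^ finrank ℝ V * ‖𝓕⁻ b (c • z)‖ * (H * ‖z‖ ^ s) := by gcongr
      _ = _ := by rw [← h3]; ring
  have hintegrable' : Integrable
      (fun z => c ^ finrank ℝ V * (‖c • z‖ ^ s * ‖𝓕⁻ b (c • z)‖)) :=
    (hintegrable.comp_smul hc.ne').const_mul _
  rw [heq, ← integral_pow_mul_comp_smul (fun z => ‖z‖ ^ s * ‖𝓕⁻ b z‖) hc, ← integral_const_mul]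
  exact norm_integral_le_of_norm_le (hintegrable'.const_mul _) (.of_forall hpt)

/-- Summation of dyadic pieces that are bounded by `2⁻ʲˢ` at high frequency and by `2ʲ⁽¹⁻ˢ⁾ r` at
low frequency. -/
theorem exists_sum_two_rpow_mul_min_le {s : ℝ} (hs0 : 0 < s) (hs1 : s < 1) :
    ∃ K : ℝ, 0 < K ∧ ∀ r : ℝ, 0 < r → r ≤ 1 → ∀ N : ℕ,
      ∑ j ∈ Finset.range N, (2 : ℝ) ^ (-((j : ℝ) * s)) * min 2 (2 ^ j * r) ≤ K * r ^ s := by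
  set q : ℝ := max (2 ^ (-s)) (2 ^ (-(1 - s)))
  have hq0 : 0 < q := lt_max_of_lt_left (by positivity)
  have hq1 : q < 1 := max_lt (Real.rpow_lt_one_of_one_lt_of_neg one_lt_two (by linarith))
    (Real.rpow_lt_one_of_one_lt_of_neg one_lt_two (by linarith))
  have hsum : Summable fun m : ℤ => q ^ m.natAbs := by
    refine Summable.of_nat_of_neg ?_ ?_ <;>
      simpa using summable_geometric_of_lt_one hq0.le hq1
  have hpos : 0 < ∑' m : ℤ, q ^ m.natAbs := hsum.tsum_pos (fun _ => by positivity) 0 (by simp)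
  refine ⟨2 * 2 ^ s * ∑' m : ℤ, q ^ m.natAbs, by positivity, fun r hr0 hr1 N => ?_⟩
  obtain ⟨J, hJ1, hJ2⟩ := exists_nat_pow_near_of_lt_one hr0 hr1 (y := (1 / 2 : ℝ)) (by norm_num)
    (by norm_num)
  have hhalf : ∀ m : ℕ, (1 / 2 : ℝ) ^ m = 2 ^ (-(m : ℝ)) := fun m => by
    rw [Real.rpow_neg two_pos.le, Real.rpow_natCast, one_div, inv_pow]
  have hJ : (2 : ℝ) ^ (-((J : ℝ) * s)) ≤ 2 ^ s * r ^ s := by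
    rw [← Real.mul_rpow two_pos.le hr0.le, ← neg_mul, Real.rpow_mul two_pos.le, ← hhalf]
    refine Real.rpow_le_rpow (by positivity) ?_ hs0.le
    rw [pow_succ] at hJ1
    linarith
  have hterm : ∀ j : ℕ, (2 : ℝ) ^ (-((j : ℝ) * s)) * min 2 (2 ^ j * r) ≤
      2 * 2 ^ (-((J : ℝ) * s)) * q ^ ((j : ℤ) - J).natAbs := fun j => by
    rcases le_total J j with h | h
    · obtain ⟨m, rfl⟩ := Nat.exists_eq_add_of_le h
      have h1 : (((J + m : ℕ) : ℤ) - J).natAbs = m := by simp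
      have h2 : (2 : ℝ) ^ (-(((J + m : ℕ) : ℝ) * s)) =
          2 ^ (-((J : ℝ) * s)) * (2 ^ (-s)) ^ m := by
        rw [← Real.rpow_natCast, ← Real.rpow_mul two_pos.le, ← Real.rpow_add two_pos]
        congr 1
        push_cast
        ring
      rw [h1, h2]
      calc _ ≤ 2 ^ (-((J : ℝ) * s)) * q ^ m * 2 := by
            gcongr
            · exact le_max_left _ _
            · exact min_le_left _ _
        _ = _ := by ring
    · obtain ⟨m, rfl⟩ := Nat.exists_eq_add_of_le h
      have h1 : ((j : ℤ) - (j + m : ℕ)).natAbs = m := by simp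
      have h2 : (2 : ℝ) ^ (-((j : ℝ) * s)) * (2 ^ j * (1 / 2) ^ (j + m)) =
          2 ^ (-(((j + m : ℕ) : ℝ) * s)) * (2 ^ (-(1 - s))) ^ m := by
        rw [hhalf, ← Real.rpow_natCast, ← Real.rpow_natCast, ← Real.rpow_mul two_pos.le,
          ← Real.rpow_add two_pos, ← Real.rpow_add two_pos, ← Real.rpow_add two_pos]
        congr 1
        push_cast
        ring
      rw [h1]
      calc _ ≤ (2 : ℝ) ^ (-((j : ℝ) * s)) * (2 ^ j * (1 / 2) ^ (j + m)) := by
            gcongr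
            exact (min_le_right _ _).trans (by gcongr)
        _ ≤ 2 ^ (-(((j + m : ℕ) : ℝ) * s)) * q ^ m := by
            rw [h2]
            gcongr
            exact le_max_right _ _
        _ ≤ _ := by
            rw [mul_assoc]
            exact le_mul_of_one_le_left (by positivity) one_le_two
  calc _ ≤ ∑ j ∈ Finset.range N, 2 * 2 ^ (-((J : ℝ) * s)) * q ^ ((j : ℤ) - J).natAbs :=
        Finset.sum_le_sum fun j _ => hterm j
    _ = 2 * 2 ^ (-((J : ℝ) * s)) * ∑ j ∈ Finset.range N, q ^ ((j : ℤ) - J).natAbs := by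
        rw [Finset.mul_sum]
    _ ≤ 2 * (2 ^ s * r ^ s) * ∑' m : ℤ, q ^ m.natAbs := by
        gcongr
        have hinj : Function.Injective fun j : ℕ => (j : ℤ) - J := fun i j h => by
          simpa using h
        have h := hsum.sum_le_tsum ((Finset.range N).map ⟨_, hinj⟩) fun _ _ => by positivity
        rw [Finset.sum_map] at h
        exact h
    _ = _ := by ring

/-- A pointwise limit whose dyadic increments are of size `2⁻ᴺˢ` and Lipschitz with constant
`2ᴺ⁽¹⁻ˢ⁾` is `s`-Hölder. -/
theorem exists_holder_bound_of_dyadic {E : Type*} [NormedAddCommGroup E] {s : ℝ} (hs0 : 0 < s)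
    (hs1 : s < 1) :
    ∃ C : ℝ, 0 < C ∧ ∀ (A : ℝ) (T : ℕ → E → ℂ) (u : E → ℂ),
      (∀ x, Tendsto (fun N => T N x) atTop (𝓝 (u x))) → (∀ x, ‖T 0 x‖ ≤ A) →
      (∀ x y, ‖T 0 x - T 0 y‖ ≤ A * ‖x - y‖) →
      (∀ (N : ℕ) x, ‖T (N + 1) x - T N x‖ ≤ A * 2 ^ (-((N : ℝ) * s))) →
      (∀ (N : ℕ) x y, ‖(T (N + 1) x - T N x) - (T (N + 1) y - T N y)‖ ≤
        A * 2 ^ (-((N : ℝ) * s)) * (2 ^ N * ‖x - y‖)) →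
      (∀ x, ‖u x‖ ≤ C * A) ∧ ∀ x y, ‖u x - u y‖ ≤ C * A * ‖x - y‖ ^ s := by
  obtain ⟨K, hK0, hK⟩ := exists_sum_two_rpow_mul_min_le hs0 hs1
  refine ⟨2 * (1 + K), by positivity, fun A T u hlim h0 h0L hD hDL => ?_⟩
  have hA : 0 ≤ A := (norm_nonneg _).trans (h0 0)
  have htel : ∀ N x, T N x = T 0 x + ∑ j ∈ Finset.range N, (T (j + 1) x - T j x) := fun N x => by
    rw [Finset.sum_range_sub (fun j => T j x)]
    ring
  have hsup : ∀ x, ‖u x‖ ≤ (1 + K) * A := fun x => by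
    refine le_of_tendsto (hlim x).norm (.of_forall fun N => ?_)
    rw [htel]
    calc _ ≤ ‖T 0 x‖ + ∑ j ∈ Finset.range N, ‖T (j + 1) x - T j x‖ :=
          (norm_add_le _ _).trans (by gcongr; exact norm_sum_le _ _)
      _ ≤ A + ∑ j ∈ Finset.range N, A * ((2 : ℝ) ^ (-((j : ℝ) * s)) * min 2 (2 ^ j * 1)) := by
          gcongr with j _
          · exact h0 x
          · refine (hD j x).trans ?_
            gcongr
            refine le_mul_of_one_le_right (by positivity) (le_min one_le_two ?_)
            rw [mul_one]
            exact one_le_pow₀ one_le_two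
      _ ≤ A + A * (K * 1 ^ s) := by
          rw [← Finset.mul_sum]
          gcongr
          exact hK 1 one_pos le_rfl N
      _ = _ := by rw [Real.one_rpow]; ring
  refine ⟨fun x => (hsup x).trans (by nlinarith), fun x y => ?_⟩
  rcases eq_or_ne x y with rfl | hxy
  · simp [hs0.ne']
  have hr : 0 < ‖x - y‖ := norm_sub_pos_iff.2 hxy
  rcases le_total 1 ‖x - y‖ with h1 | h1
  · calc ‖u x - u y‖ ≤ ‖u x‖ + ‖u y‖ := norm_sub_le _ _
      _ ≤ (1 + K) * A + (1 + K) * A := add_le_add (hsup x) (hsup y)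
      _ = 2 * (1 + K) * A * 1 := by ring
      _ ≤ _ := by gcongr; exact Real.one_le_rpow h1 hs0.le
  · refine le_of_tendsto ((hlim x).sub (hlim y)).norm (.of_forall fun N => ?_)
    rw [htel N x, htel N y, add_sub_add_comm, ← Finset.sum_sub_distrib]
    calc _ ≤ ‖T 0 x - T 0 y‖ +
          ∑ j ∈ Finset.range N, ‖(T (j + 1) x - T j x) - (T (j + 1) y - T j y)‖ :=
          (norm_add_le _ _).trans (by gcongr; exact norm_sum_le _ _)
      _ ≤ A * ‖x - y‖ ^ s + ∑ j ∈ Finset.range N,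
            A * ((2 : ℝ) ^ (-((j : ℝ) * s)) * min 2 (2 ^ j * ‖x - y‖)) := by
          gcongr with j _
          · refine (h0L x y).trans ?_
            gcongr
            exact Real.self_le_rpow_of_le_one hr.le h1 hs1.le
          · rw [← mul_assoc, mul_min_of_nonneg _ _ (by positivity)]
            refine le_min ((norm_sub_le _ _).trans ?_) (hDL j x y)
            linarith [hD j x, hD j y]
      _ ≤ A * ‖x - y‖ ^ s + A * (K * ‖x - y‖ ^ s) := by
          rw [← Finset.mul_sum]
          gcongr
          exact hK _ hr h1 N
      _ = ((1 + K) * A) * ‖x - y‖ ^ s := by ring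
      _ ≤ _ := by gcongr; linarith

end LittlewoodPaley

/-- The Littlewood–Paley cutoffs as Schwartz symbols, and the blocks as the associated Fourier
multipliers. -/
theorem exists_lpBlock_symbols {n : ℕ} {φ χ : EuclideanSpace ℝ (Fin n) → ℝ}
    (hφ_sm : ContDiff ℝ (⊤ : ℕ∞) φ) (hχ_sm : ContDiff ℝ (⊤ : ℕ∞) χ)
    (hφ_supp : Function.support φ ⊆ {ξ : EuclideanSpace ℝ (Fin n) | 1/2 ≤ ‖ξ‖ ∧ ‖ξ‖ ≤ 2})
    (hχ_supp : Function.support χ ⊆ {ξ : EuclideanSpace ℝ (Fin n) | ‖ξ‖ ≤ 1})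
    (h_sum : ∀ ξ, χ ξ + ∑' j : ℕ, φ ((2:ℝ) ^ (-(j:ℤ)) • ξ) = 1) :
    ∃ a b : 𝓢(EuclideanSpace ℝ (Fin n), ℂ),
      (∀ ξ, ‖ξ‖ < 1 / 2 → a ξ = 1) ∧ b 0 = 0 ∧ (∀ ξ, a ξ ≠ 0 → ‖ξ‖ ≤ 1) ∧
      (∀ ξ, b ξ ≠ 0 → ‖ξ‖ ≤ 2) ∧ (∀ ξ, a ((2 : ℝ)⁻¹ • ξ) = a ξ + b ξ) ∧
      (∀ u, lpBlock χ φ (-1) u = ((𝓕⁻ a : 𝓢(EuclideanSpace ℝ (Fin n), ℂ)) :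
        EuclideanSpace ℝ (Fin n) → ℂ) ⋆[ContinuousLinearMap.mul ℝ ℂ] u) ∧
      ∀ (j : ℕ) u, lpBlock χ φ j u =
        ((𝓕⁻ (b.dilate (pow_pos two_pos j)) : 𝓢(EuclideanSpace ℝ (Fin n), ℂ)) :
          EuclideanSpace ℝ (Fin n) → ℂ) ⋆[ContinuousLinearMap.mul ℝ ℂ] u := by
  have hφ_zero : ∀ ξ, ‖ξ‖ < 1 / 2 → φ ξ = 0 := fun ξ hξ => by
    by_contra h
    exact absurd (hφ_supp h).1 (not_le.2 hξ)
  have hscale : ∀ (j : ℕ) (ξ : EuclideanSpace ℝ (Fin n)),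
      ‖(2 : ℝ) ^ (-(j : ℤ)) • ξ‖ = ‖ξ‖ / 2 ^ j := fun j ξ => by
    rw [norm_smul, Real.norm_of_nonneg (by positivity), zpow_neg, zpow_natCast]
    field_simp
  have hsummable : ∀ ξ, Summable fun j : ℕ => φ ((2:ℝ) ^ (-(j:ℤ)) • ξ) := fun ξ => by
    obtain ⟨N, hN⟩ := pow_unbounded_of_one_lt (2 * ‖ξ‖) (one_lt_two (α := ℝ))
    refine summable_of_ne_finset_zero (s := Finset.range N) fun j hj => hφ_zero _ ?_
    rw [hscale, div_lt_iff₀ (by positivity)]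
    have : (2 : ℝ) ^ N ≤ 2 ^ j := pow_le_pow_right₀ one_le_two (by simpa using hj)
    linarith
  have hstep : ∀ ξ, χ ((2 : ℝ)⁻¹ • ξ) = χ ξ + φ ξ := fun ξ => by
    have h1 := h_sum ξ
    have h2 := h_sum ((2 : ℝ)⁻¹ • ξ)
    rw [(hsummable ξ).tsum_eq_zero_add] at h1
    have h3 : ∀ j : ℕ, (2 : ℝ) ^ (-(j : ℤ)) • (2 : ℝ)⁻¹ • ξ =
        (2 : ℝ) ^ (-((j + 1 : ℕ) : ℤ)) • ξ := fun j => by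
      rw [smul_smul, zpow_neg, zpow_neg, zpow_natCast, zpow_natCast, pow_succ, mul_inv]
    simp_rw [h3] at h2
    simp only [Nat.cast_zero, neg_zero, zpow_zero, one_smul] at h1
    linarith
  have hone : ∀ ξ, ‖ξ‖ < 1 / 2 → χ ξ = 1 := fun ξ hξ => by
    have h : ∀ j : ℕ, φ ((2:ℝ) ^ (-(j:ℤ)) • ξ) = 0 := fun j => by
      refine hφ_zero _ ?_
      rw [hscale]
      exact (div_le_self (norm_nonneg ξ) (one_le_pow₀ one_le_two)).trans_lt hξ
    have h1 := h_sum ξ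
    simp only [h, tsum_zero, add_zero] at h1
    exact h1
  have hχ_cs : HasCompactSupport fun ξ => (χ ξ : ℂ) := by
    refine HasCompactSupport.intro (isCompact_closedBall 0 1) fun ξ hξ => ?_
    by_contra h
    exact hξ (by simpa using hχ_supp fun h0 => h (by simp [h0]))
  have hφ_cs : HasCompactSupport fun ξ => (φ ξ : ℂ) := by
    refine HasCompactSupport.intro (isCompact_closedBall 0 2) fun ξ hξ => ?_
    by_contra h
    exact hξ (by simpa using (hφ_supp fun h0 => h (by simp [h0])).2)
  have hχ_sm' : ContDiff ℝ (⊤ : ℕ∞) fun ξ => (χ ξ : ℂ) := Complex.ofRealCLM.contDiff.comp hχ_sm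
  have hφ_sm' : ContDiff ℝ (⊤ : ℕ∞) fun ξ => (φ ξ : ℂ) := Complex.ofRealCLM.contDiff.comp hφ_sm
  obtain ⟨a, ha⟩ : ∃ a : 𝓢(EuclideanSpace ℝ (Fin n), ℂ), ∀ ξ, a ξ = χ ξ :=
    ⟨hχ_cs.toSchwartzMap hχ_sm', fun _ => rfl⟩
  obtain ⟨b, hb⟩ : ∃ b : 𝓢(EuclideanSpace ℝ (Fin n), ℂ), ∀ ξ, b ξ = φ ξ :=
    ⟨hφ_cs.toSchwartzMap hφ_sm', fun _ => rfl⟩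
  refine ⟨a, b, fun ξ hξ => ?_, ?_, fun ξ hξ => ?_, fun ξ hξ => ?_, fun ξ => ?_, fun u => ?_,
    fun j u => ?_⟩
  · simp [ha, hone ξ hξ]
  · simp [hb, hφ_zero 0 (by simp)]
  · exact hχ_supp (by simpa [ha] using hξ)
  · exact (hφ_supp (by simpa [hb] using hξ)).2
  · simp [ha, hb, hstep ξ]
  · rw [lpBlock, lpKernel, if_pos rfl, fourierInv_coe, ← funext ha]
  · rw [lpBlock, lpKernel, if_neg (by omega), fourierInv_coe]
    congr 2
    ext ξ
    rw [dilate_apply, hb, zpow_neg, zpow_natCast]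

/-- Blocks of Hölder functions decay dyadically. -/
theorem exists_norm_lpBlock_le {n : ℕ} {φ χ : EuclideanSpace ℝ (Fin n) → ℝ}
    (hφ_sm : ContDiff ℝ (⊤ : ℕ∞) φ) (hχ_sm : ContDiff ℝ (⊤ : ℕ∞) χ)
    (hφ_supp : Function.support φ ⊆ {ξ : EuclideanSpace ℝ (Fin n) | 1/2 ≤ ‖ξ‖ ∧ ‖ξ‖ ≤ 2})
    (hχ_supp : Function.support χ ⊆ {ξ : EuclideanSpace ℝ (Fin n) | ‖ξ‖ ≤ 1})
    (h_sum : ∀ ξ, χ ξ + ∑' j : ℕ, φ ((2:ℝ) ^ (-(j:ℤ)) • ξ) = 1)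
    {s : ℝ} (hs0 : 0 < s) (hs1 : s < 1) :
    ∃ C : ℝ, 0 ≤ C ∧ ∀ u : EuclideanSpace ℝ (Fin n) → ℂ, Continuous u →
      (∃ B : ℝ, ∀ x, ‖u x‖ ≤ B) → ∀ H : ℝ, (∀ᵐ x, ‖u x‖ ≤ H) →
      (∀ x y, ‖u x - u y‖ ≤ H * ‖x - y‖ ^ s) →
      ∀ j : ℤ, -1 ≤ j → ∀ x, ‖lpBlock χ φ j u x‖ ≤ C * H * 2 ^ (-((j : ℝ) * s)) := by
  obtain ⟨a, b, -, hb0, -, -, -, hblock_neg, hblock⟩ :=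
    exists_lpBlock_symbols hφ_sm hχ_sm hφ_supp hχ_supp h_sum
  have hI : 0 ≤ ∫ z, ‖𝓕⁻ a z‖ := integral_nonneg fun z => norm_nonneg _
  have hI' : 0 ≤ ∫ z, ‖z‖ ^ s * ‖𝓕⁻ b z‖ := integral_nonneg fun z => by positivity
  refine ⟨(∫ z, ‖𝓕⁻ a z‖) + ∫ z, ‖z‖ ^ s * ‖𝓕⁻ b z‖, by positivity,
    fun u hu ⟨B, hB⟩ H hH hHol j hj x => ?_⟩
  have hH0 : 0 ≤ H := by
    obtain ⟨x, hx⟩ := hH.exists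
    exact (norm_nonneg _).trans hx
  rcases hj.eq_or_lt with rfl | hj
  · rw [hblock_neg]
    calc _ ≤ H * ∫ z, ‖𝓕⁻ a z‖ := norm_convolution_le_of_ae_bound (𝓕⁻ a).integrable hH x
      _ ≤ H * ((∫ z, ‖𝓕⁻ a z‖) + ∫ z, ‖z‖ ^ s * ‖𝓕⁻ b z‖) := by gcongr; linarith
      _ = ((∫ z, ‖𝓕⁻ a z‖) + ∫ z, ‖z‖ ^ s * ‖𝓕⁻ b z‖) * H * 1 := by ring
      _ ≤ _ := by
          gcongr
          exact Real.one_le_rpow one_le_two (by push_cast; linarith)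
  · lift j to ℕ using by omega
    rw [hblock]
    refine (b.norm_fourierInv_dilate_convolution_le hb0 hs0 hs1 _ hu hB hHol x).trans ?_
    rw [← Real.rpow_natCast, ← Real.rpow_mul two_pos.le, mul_neg, Int.cast_natCast]
    calc _ = (∫ z, ‖z‖ ^ s * ‖𝓕⁻ b z‖) * H * 2 ^ (-((j : ℝ) * s)) := by ring
      _ ≤ _ := by gcongr; linarith

/-- Dyadic decay of the blocks implies Hölder regularity. -/
theorem exists_holder_bound_of_lpBlock_le {n : ℕ} {φ χ : EuclideanSpace ℝ (Fin n) → ℝ}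
    (hφ_sm : ContDiff ℝ (⊤ : ℕ∞) φ) (hχ_sm : ContDiff ℝ (⊤ : ℕ∞) χ)
    (hφ_supp : Function.support φ ⊆ {ξ : EuclideanSpace ℝ (Fin n) | 1/2 ≤ ‖ξ‖ ∧ ‖ξ‖ ≤ 2})
    (hχ_supp : Function.support χ ⊆ {ξ : EuclideanSpace ℝ (Fin n) | ‖ξ‖ ≤ 1})
    (h_sum : ∀ ξ, χ ξ + ∑' j : ℕ, φ ((2:ℝ) ^ (-(j:ℤ)) • ξ) = 1)
    {s : ℝ} (hs0 : 0 < s) (hs1 : s < 1) :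
    ∃ C : ℝ, 0 ≤ C ∧ ∀ u : EuclideanSpace ℝ (Fin n) → ℂ, Continuous u →
      (∃ B : ℝ, ∀ x, ‖u x‖ ≤ B) → ∀ M : ℝ, 0 ≤ M →
      (∀ j : ℤ, -1 ≤ j → ∀ᵐ x, ‖lpBlock χ φ j u x‖ ≤ M * 2 ^ (-((j : ℝ) * s))) →
      (∀ x, ‖u x‖ ≤ C * M) ∧ ∀ x y, ‖u x - u y‖ ≤ C * M * ‖x - y‖ ^ s := by
  obtain ⟨a, b, ha1, -, ha, hb, hab, hblock_neg, hblock⟩ :=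
    exists_lpBlock_symbols hφ_sm hχ_sm hφ_supp hχ_supp h_sum
  obtain ⟨A, hA0, hA⟩ := a.exists_bernstein_bound ha1
  obtain ⟨C, hC0, hC⟩ := exists_holder_bound_of_dyadic (E := EuclideanSpace ℝ (Fin n)) hs0 hs1
  refine ⟨C * (2 * A), by positivity, fun u hu ⟨B, hB⟩ M hM0 hM => ?_⟩
  set T : ℕ → EuclideanSpace ℝ (Fin n) → ℂ := fun N =>
    ((𝓕⁻ (a.dilate (pow_pos two_pos N)) : 𝓢(EuclideanSpace ℝ (Fin n), ℂ)) :
      EuclideanSpace ℝ (Fin n) → ℂ) ⋆[ContinuousLinearMap.mul ℝ ℂ] u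
  have hT0 : T 0 = lpBlock χ φ (-1) u := by
    have h : a.dilate (pow_pos (two_pos (α := ℝ)) 0) = a := by ext ξ; simp [dilate_apply]
    simp only [T, h, hblock_neg]
  have hTsucc : ∀ (N : ℕ) x, T (N + 1) x - T N x = lpBlock χ φ N u x := fun N x => by
    have h : a.dilate (pow_pos (two_pos (α := ℝ)) (N + 1)) =
        a.dilate (pow_pos two_pos N) + b.dilate (pow_pos two_pos N) := by
      ext ξ
      rw [add_apply, dilate_apply, dilate_apply, dilate_apply, ← hab, smul_smul, pow_succ, mul_inv,
        mul_comm]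
    have hex : ∀ k : 𝓢(EuclideanSpace ℝ (Fin n), ℂ),
        ConvolutionExistsAt k u x (ContinuousLinearMap.mul ℝ ℂ) volume := fun k =>
      convolutionExistsAt_of_ae_bound k.integrable hu.aestronglyMeasurable (.of_forall hB) x
    simp only [T, h, hblock, fourierInv_add]
    rw [sub_eq_iff_eq_add']
    exact (hex _).add_distrib (hex _)
  have hbern_neg := hA one_pos a ha u hu ⟨B, hB⟩ (2 * M) (by
    filter_upwards [hM (-1) le_rfl] with x hx
    rw [← hblock_neg]
    refine hx.trans ?_
    rw [mul_comm]
    gcongr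
    refine (Real.rpow_le_rpow_of_exponent_le one_le_two ?_).trans (Real.rpow_one 2).le
    push_cast
    linarith)
  have hbern : ∀ N : ℕ, _ := fun N => hA (c := 2 * 2 ^ N) (by positivity)
    (b.dilate (pow_pos two_pos N)) (fun ξ hξ => by
      rw [dilate_apply] at hξ
      have := hb _ hξ
      rwa [norm_smul, Real.norm_of_nonneg (by positivity), inv_mul_le_iff₀ (by positivity),
        mul_comm] at this) u hu ⟨B, hB⟩ (M * 2 ^ (-((N : ℝ) * s))) (by
      rw [← hblock]
      exact_mod_cast hM N (by omega))
  simp_rw [← hblock, ← hTsucc] at hbern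
  rw [← hblock_neg, ← hT0] at hbern_neg
  have key := hC (2 * A * M) T u
    (fun x => a.tendsto_fourierInv_dilate_convolution (ha1 0 (by simp)) hu hB _
      (tendsto_pow_atTop_atTop_of_one_lt one_lt_two) x)
    (fun x => (hbern_neg.1 x).trans_eq (by ring))
    (fun x y => (hbern_neg.2 x y).trans_eq (by ring))
    (fun N x => ((hbern N).1 x).trans (by
      have : 0 ≤ A * (M * (2 : ℝ) ^ (-((N : ℝ) * s))) := by positivity
      linarith))
    (fun N x y => ((hbern N).2 x y).trans_eq (by ring))
  rwa [← mul_assoc] at key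

theorem eLpNorm_top_le_ofReal_iff {α : Type*} [MeasurableSpace α] {μ : Measure α} {f : α → ℂ}
    {B : ℝ} (hB : 0 ≤ B) :
    eLpNorm f ⊤ μ ≤ ENNReal.ofReal B ↔ ∀ᵐ x ∂μ, ‖f x‖ ≤ B := by
  rw [eLpNorm_exponent_top]
  constructor
  · intro h
    filter_upwards [ae_le_eLpNormEssSup (f := f) (μ := μ)] with x hx
    have := hx.trans h
    rwa [← ofReal_norm, ENNReal.ofReal_le_ofReal_iff hB] at this
  · intro h
    exact eLpNormEssSup_le_of_ae_bound h

theorem two_rpow_mul_le_ofReal_iff {t M : ℝ} {a : ℝ≥0∞} :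
    (2 : ℝ≥0∞) ^ t * a ≤ ENNReal.ofReal M ↔ a ≤ ENNReal.ofReal (M * 2 ^ (-t)) := by
  have h : (2 : ℝ≥0∞) ^ t = ENNReal.ofReal (2 ^ t) := by
    rw [← ENNReal.ofReal_rpow_of_pos two_pos, ENNReal.ofReal_ofNat]
  rw [Real.rpow_neg two_pos.le, ← div_eq_mul_inv, ENNReal.ofReal_div_of_pos (by positivity), h,
    mul_comm, ENNReal.le_div_iff_mul_le] <;> left
  · simpa using Real.rpow_pos_of_pos two_pos t
  · simp

theorem nnnorm_div_edist_rpow_le_ofReal_iff {E : Type*} [NormedAddCommGroup E] {x y : E}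
    (hxy : x ≠ y) {s H : ℝ} (z : ℂ) (hH : 0 ≤ H) :
    (‖z‖₊ : ℝ≥0∞) / edist x y ^ s ≤ ENNReal.ofReal H ↔ ‖z‖ ≤ H * ‖x - y‖ ^ s := by
  have hr : 0 < ‖x - y‖ := norm_sub_pos_iff.2 hxy
  rw [edist_dist, dist_eq_norm, ENNReal.ofReal_rpow_of_pos hr, ENNReal.div_le_iff
    (by simpa using Real.rpow_pos_of_pos hr s) (by simp), ← ENNReal.ofReal_mul hH,
    ← enorm_eq_nnnorm, ← ofReal_norm, ENNReal.ofReal_le_ofReal_iff (by positivity)]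

/-- Littlewood–Paley characterization of Hölder spaces `C^s`, `0 < s < 1`: there is
`C = C_s > 0` so that for bounded continuous `u`, (i) `sup_{j≥−1} 2^{js}‖Δⱼu‖_∞ ≤ C|u|_{C^s}`
whenever `|u|_{C^s} < ∞`, and (ii) `|u|_{C^s} ≤ C·sup_{j≥−1} 2^{js}‖Δⱼu‖_∞` whenever the
latter sup is finite. -/
theorem stmt_4 (n : ℕ) (hn : 1 ≤ n)
    (φ χ : EuclideanSpace ℝ (Fin n) → ℝ)
    (hφ_sm : ContDiff ℝ (⊤ : ℕ∞) φ) (hχ_sm : ContDiff ℝ (⊤ : ℕ∞) χ)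
    (hφ_rad : ∃ h : ℝ → ℝ, ∀ ξ, φ ξ = h ‖ξ‖)
    (hχ_rad : ∃ h : ℝ → ℝ, ∀ ξ, χ ξ = h ‖ξ‖)
    (hφ_supp : Function.support φ ⊆ {ξ : EuclideanSpace ℝ (Fin n) | 1/2 ≤ ‖ξ‖ ∧ ‖ξ‖ ≤ 2})
    (hχ_supp : Function.support χ ⊆ {ξ : EuclideanSpace ℝ (Fin n) | ‖ξ‖ ≤ 1})
    (h_sum : ∀ ξ, χ ξ + ∑' j : ℕ, φ ((2:ℝ) ^ (-(j:ℤ)) • ξ) = 1)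
    (s : ℝ) (hs0 : 0 < s) (hs1 : s < 1) :
    ∃ C > (0:ℝ), ∀ u : EuclideanSpace ℝ (Fin n) → ℂ, Continuous u →
      (∃ B : ℝ, ∀ x, ‖u x‖ ≤ B) →
      ((holderNorm s u < ⊤ → ∀ j : ℤ, -1 ≤ j →
          (2:ℝ≥0∞) ^ ((j:ℝ) * s) * eLpNorm (lpBlock χ φ j u) ⊤ volume ≤
            ENNReal.ofReal C * holderNorm s u) ∧
        ((⨆ (j : ℤ) (_ : -1 ≤ j),
            (2:ℝ≥0∞) ^ ((j:ℝ) * s) * eLpNorm (lpBlock χ φ j u) ⊤ volume) < ⊤ →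
          holderNorm s u ≤ ENNReal.ofReal C *
            ⨆ (j : ℤ) (_ : -1 ≤ j),
              (2:ℝ≥0∞) ^ ((j:ℝ) * s) * eLpNorm (lpBlock χ φ j u) ⊤ volume)) := by
  obtain ⟨C₁, hC₁, h₁⟩ := exists_norm_lpBlock_le hφ_sm hχ_sm hφ_supp hχ_supp h_sum hs0 hs1
  obtain ⟨C₂, hC₂, h₂⟩ :=
    exists_holder_bound_of_lpBlock_le hφ_sm hχ_sm hφ_supp hχ_supp h_sum hs0 hs1
  refine ⟨C₁ + 2 * C₂ + 1, by positivity, fun u hu hB => ⟨fun hfin j hj => ?_, fun hfin => ?_⟩⟩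
  · obtain ⟨H, hH0, hH⟩ : ∃ H : ℝ, 0 ≤ H ∧ holderNorm s u = ENNReal.ofReal H :=
      ⟨_, ENNReal.toReal_nonneg, (ENNReal.ofReal_toReal hfin.ne).symm⟩
    have hsup : ∀ᵐ x, ‖u x‖ ≤ H :=
      (eLpNorm_top_le_ofReal_iff hH0).1 (hH ▸ le_self_add)
    have hhol : ∀ x y, ‖u x - u y‖ ≤ H * ‖x - y‖ ^ s := fun x y => by
      rcases eq_or_ne x y with rfl | hxy
      · simp [hs0.ne']
      refine (nnnorm_div_edist_rpow_le_ofReal_iff hxy _ hH0).1 (hH ▸ le_add_left ?_)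
      exact le_iSup_of_le x (le_iSup₂_of_le y hxy le_rfl)
    rw [hH, ← ENNReal.ofReal_mul (by positivity), two_rpow_mul_le_ofReal_iff,
      eLpNorm_top_le_ofReal_iff (by positivity)]
    refine .of_forall fun x => (h₁ u hu hB H hsup hhol j hj x).trans ?_
    gcongr
    linarith
  · set S := ⨆ (j : ℤ) (_ : -1 ≤ j),
      (2:ℝ≥0∞) ^ ((j:ℝ) * s) * eLpNorm (lpBlock χ φ j u) ⊤ volume with hS_def
    obtain ⟨M, hM0, hM⟩ : ∃ M : ℝ, 0 ≤ M ∧ S = ENNReal.ofReal M :=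
      ⟨_, ENNReal.toReal_nonneg, (ENNReal.ofReal_toReal hfin.ne).symm⟩
    obtain ⟨hsup, hhol⟩ := h₂ u hu hB M hM0 fun j hj => by
      rw [← eLpNorm_top_le_ofReal_iff (by positivity), ← two_rpow_mul_le_ofReal_iff, ← hM, hS_def]
      exact le_iSup₂_of_le j hj le_rfl
    have hle : holderNorm s u ≤ ENNReal.ofReal (C₂ * M) + ENNReal.ofReal (C₂ * M) := by
      refine add_le_add ((eLpNorm_top_le_ofReal_iff (by positivity)).2 (.of_forall hsup))
        (iSup_le fun x => iSup₂_le fun y hxy => ?_)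
      exact (nnnorm_div_edist_rpow_le_ofReal_iff hxy _ (by positivity)).2 (hhol x y)
    rw [hM, ← ENNReal.ofReal_mul (by positivity)]
    refine hle.trans ?_
    rw [← ENNReal.ofReal_add (by positivity) (by positivity)]
    refine ENNReal.ofReal_le_ofReal ?_
    nlinarith [mul_nonneg hC₁ hM0]
end

section
/- Let μ ∈ (0,1], K > 0, l > 0. Let φ : ℝ² → ℝ be continuously differentiable with |∇φ(x)−∇φ(y)| ≤ K|x−y|^μ for all x,y. Let p ∈ ℝ² with φ(p) = 0 and |∇φ(p)| ≥ l. Set E = {x ∈ ℝ² : φ(x) > 0} and P = {y ∈ ℝ² : ∇φ(p)·(y−p) > 0}. Then there is a constant C depending only on μ such that for every ε > 0, the two-dimensional Lebesgue measure of (E Δ P) ∩ B(p,ε) is at most C·(K/l)·ε^{2+μ}, where E Δ P denotes the symmetric difference. -/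
open MeasureTheory

/-- The part of a planar strip of half-width `a` inside a disc of radius `r` has area at most
`4 * a * r`. -/
theorem volume_strip_inter_ball_le (u p : EuclideanSpace ℝ (Fin 2)) (hu : ‖u‖ = 1) (a r : ℝ)
    (ha : 0 ≤ a) :
    volume ({x : EuclideanSpace ℝ (Fin 2) | |inner ℝ u (x - p)| ≤ a} ∩ Metric.ball p r) ≤
      ENNReal.ofReal (4 * a * r) := by
  obtain ⟨b, hb⟩ := Orthonormal.exists_orthonormalBasis_extension_of_card_eq (𝕜 := ℝ)
    (E := EuclideanSpace ℝ (Fin 2)) (ι := Fin 2) (by simp) (v := fun _ => u) (s := {0})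
    (by
      refine ⟨fun _ => by simpa using hu, fun i j hij => ?_⟩
      exact absurd (Subsingleton.elim i j) hij)
  have hb0 : b 0 = u := hb 0 rfl
  let c : Fin 2 → ℝ := ![a, r]
  let S : Set (Fin 2 → ℝ) := Set.Icc (-c) c
  have hmp : MeasurePreserving
      (fun x : EuclideanSpace ℝ (Fin 2) => WithLp.ofLp (b.repr (x - p))) volume volume :=
    (PiLp.volume_preserving_ofLp (Fin 2)).comp
      (b.repr.measurePreserving.comp (measurePreserving_sub_right volume p))
  calc _ ≤ volume ((fun x : EuclideanSpace ℝ (Fin 2) => WithLp.ofLp (b.repr (x - p))) ⁻¹' S) := by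
        refine measure_mono ?_
        rintro x ⟨hx, hxr⟩
        have hx1 : |inner ℝ (b 1) (x - p)| ≤ r :=
          (abs_real_inner_le_norm _ _).trans (by
            rw [b.norm_eq_one, one_mul, ← dist_eq_norm]; exact (Metric.mem_ball.1 hxr).le)
        rw [Set.mem_ofPred_eq, ← hb0] at hx
        rw [abs_le] at hx hx1
        simp only [Set.mem_preimage, S, Set.mem_Icc, Pi.le_def, Fin.forall_fin_two]
        simp only [b.repr_apply_apply, c, Pi.neg_apply, Matrix.cons_val_zero, Matrix.cons_val_one]
        exact ⟨⟨hx.1, hx1.1⟩, hx.2, hx1.2⟩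
    _ = volume S := hmp.measure_preimage measurableSet_Icc.nullMeasurableSet
    _ = ENNReal.ofReal (4 * a * r) := by
        simp only [S, Real.volume_Icc_pi, Fin.prod_univ_two, c, Pi.neg_apply,
          Matrix.cons_val_zero, Matrix.cons_val_one]
        rw [← ENNReal.ofReal_mul (by linarith)]
        congr 1
        ring

/-- First-order Taylor estimate for a function with Hölder continuous derivative. -/
theorem abs_sub_fderiv_le_of_holder {E : Type*} [NormedAddCommGroup E] [NormedSpace ℝ E]
    {φ : E → ℝ} {K μ ε : ℝ} {p x : E} (hμ : 0 ≤ μ) (hK : 0 ≤ K) (hφ : Differentiable ℝ φ)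
    (hH : ∀ y, ‖fderiv ℝ φ y - fderiv ℝ φ p‖ ≤ K * ‖y - p‖ ^ μ) (hx : x ∈ Metric.ball p ε) :
    |φ x - φ p - fderiv ℝ φ p (x - p)| ≤ K * ε ^ μ * ε := by
  have hε : 0 < ε := Metric.pos_of_mem_ball hx
  have h := (convex_ball p ε).norm_image_sub_le_of_norm_fderiv_le' (𝕜 := ℝ) (f := φ)
    (φ := fderiv ℝ φ p) (C := K * ε ^ μ) (fun y _ => hφ y)
    (fun y hy => (hH y).trans (by
      rw [← dist_eq_norm]
      have := (Metric.mem_ball.1 hy).le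
      gcongr)) (Metric.mem_ball_self hε) hx
  refine h.trans ?_
  rw [← dist_eq_norm]
  have := (Metric.mem_ball.1 hx).le
  gcongr

/-- Measure of the symmetric difference between the superlevel set `E = {φ > 0}` of a
`C^{1,μ}` function and the half-plane `P` determined by the tangent line at a boundary point
`p`: `|E ∆ P ∩ B(p,ε)| ≤ C(μ)·(K/l)·ε^{2+μ}`. -/
theorem stmt_18 (μ : ℝ) (hμ : μ ∈ Set.Ioc (0:ℝ) 1) :
    ∃ C > (0:ℝ), ∀ K l : ℝ, 0 < K → 0 < l →
      ∀ φ : EuclideanSpace ℝ (Fin 2) → ℝ, ContDiff ℝ 1 φ →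
      (∀ x y : EuclideanSpace ℝ (Fin 2), ‖fderiv ℝ φ x - fderiv ℝ φ y‖ ≤ K * ‖x - y‖ ^ μ) →
      ∀ p : EuclideanSpace ℝ (Fin 2), φ p = 0 → l ≤ ‖fderiv ℝ φ p‖ →
      ∀ ε : ℝ, 0 < ε →
        volume (symmDiff {x : EuclideanSpace ℝ (Fin 2) | 0 < φ x}
            {y : EuclideanSpace ℝ (Fin 2) | 0 < fderiv ℝ φ p (y - p)} ∩ Metric.ball p ε) ≤
          ENNReal.ofReal (C * (K / l) * ε ^ (2 + μ)) := by
  refine ⟨4, by norm_num, fun K l hK hl φ hφ hH p hp hlp ε hε => ?_⟩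
  set L := fderiv ℝ φ p with hL
  let v := (InnerProductSpace.toDual ℝ (EuclideanSpace ℝ (Fin 2))).symm L
  have hv : ‖v‖ = ‖L‖ := LinearIsometryEquiv.norm_map _ _
  have hLv : ∀ y, inner ℝ v y = L y := fun y => InnerProductSpace.toDual_symm_apply
  have hL0 : 0 < ‖L‖ := hl.trans_le hlp
  have hu : ‖‖L‖⁻¹ • v‖ = 1 := by
    rw [norm_smul, norm_inv, norm_norm, hv, inv_mul_cancel₀ hL0.ne']
  refine (measure_mono ?_).trans ((volume_strip_inter_ball_le (‖L‖⁻¹ • v) p hu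
    (K * ε ^ μ * ε / l) ε (by positivity)).trans_eq ?_)
  · rintro x ⟨hx, hxε⟩
    refine ⟨?_, hxε⟩
    have hT := abs_sub_fderiv_le_of_holder hμ.1.le hK.le (hφ.differentiable one_ne_zero)
      (fun y => hH y p) hxε
    rw [hp, sub_zero, ← hL, abs_le] at hT
    have hLx : |L (x - p)| ≤ K * ε ^ μ * ε := by
      rw [abs_le]
      rcases hx with ⟨h1, h2⟩ | ⟨h1, h2⟩ <;> simp only [Set.mem_ofPred_eq, not_lt] at h1 h2 <;>
        constructor <;> linarith
    rw [Set.mem_ofPred_eq, real_inner_smul_left, hLv, abs_mul, abs_inv, abs_norm,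
      inv_mul_eq_div]
    gcongr
  · rw [Real.rpow_add hε, Real.rpow_two]
    congr 1
    ring
end

section
/- Let μ ∈ (0,1], and let φ : ℝ² → ℝ be continuously differentiable with Hölder seminorm |∇φ|_μ := sup_{x≠y}|∇φ(x)−∇φ(y)|/|x−y|^μ finite and positive. Suppose E = {x ∈ ℝ² : φ(x) > 0} is nonempty and bounded, and |∇φ|_inf := inf_{x∈∂E}|∇φ(x)| > 0. Set δ = (|∇φ|_inf/|∇φ|_μ)^{1/μ}. Let x₀ ∈ E with d(x₀) := dist(x₀, ∂E) < δ, let x̃ ∈ ∂E be a point with |x₀−x̃| = d(x₀), and for ρ ≥ d(x₀) define S_ρ(x₀) = {z : |z|=1, x₀+ρz ∈ E}, Σ(x₀) = {z : |z|=1, ∇φ(x̃)·z ≥ 0}, and R_ρ(x₀) = S_ρ(x₀) Δ Σ(x₀) (symmetric difference). Then the one-dimensional Hausdorff measure of R_ρ(x₀) satisfies H¹(R_ρ(x₀)) ≤ 2π·((1+2^μ)·d(x₀)/ρ + 2^μ·(ρ/δ)^μ). -/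
open MeasureTheory
open scoped ENNReal

/-- The Jordan inequality, in the form of a linear upper bound for the arcsine. -/
lemma arcsin_le_half_pi_mul {A : ℝ} (hA : 0 ≤ A) : Real.arcsin A ≤ Real.pi / 2 * A := by
  have hpi := Real.pi_pos
  rcases le_total A 1 with h1 | h1
  · have h := Real.mul_le_sin (Real.arcsin_nonneg.2 hA) (Real.arcsin_le_pi_div_two A)
    rw [Real.sin_arcsin (by linarith) h1] at h
    calc Real.arcsin A = Real.pi / 2 * (2 / Real.pi * Real.arcsin A) := by field_simp
      _ ≤ Real.pi / 2 * A := by gcongr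
  · rw [Real.arcsin_of_one_le h1]
    nlinarith

/-- The unit circle, parametrized by arclength starting at the direction orthogonal to `u`. -/
noncomputable def circleParam (u : EuclideanSpace ℝ (Fin 2)) (t : ℝ) :
    EuclideanSpace ℝ (Fin 2) :=
  !₂[-u 1 * Real.cos t + u 0 * Real.sin t, u 0 * Real.cos t + u 1 * Real.sin t]

lemma lipschitzWith_circleParam {u : EuclideanSpace ℝ (Fin 2)} (hu : u 0 ^ 2 + u 1 ^ 2 = 1) :
    LipschitzWith 1 (circleParam u) := by
  refine LipschitzWith.of_dist_le_mul fun a b => ?_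
  rw [NNReal.coe_one, one_mul, EuclideanSpace.dist_eq, Real.dist_eq]
  refine Real.sqrt_le_iff.2 ⟨abs_nonneg _, ?_⟩
  rw [sq_abs, Fin.sum_univ_two, Real.dist_eq, Real.dist_eq, sq_abs, sq_abs]
  simp only [circleParam, PiLp.toLp_apply, Matrix.cons_val_zero, Matrix.cons_val_one]
  have hcos := Real.one_sub_sq_div_two_le_cos (x := a - b)
  rw [Real.cos_sub] at hcos
  calc _ = (u 0 ^ 2 + u 1 ^ 2) *
        ((Real.sin a ^ 2 + Real.cos a ^ 2) + (Real.sin b ^ 2 + Real.cos b ^ 2)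
          - 2 * (Real.cos a * Real.cos b + Real.sin a * Real.sin b)) := by ring
    _ = 2 - 2 * (Real.cos a * Real.cos b + Real.sin a * Real.sin b) := by
        rw [hu, Real.sin_sq_add_cos_sq, Real.sin_sq_add_cos_sq]; ring
    _ ≤ (a - b) ^ 2 := by linarith

/-- The unit vectors whose component along a unit vector `u` is at most `A` in absolute value
form a set of arclength at most `2πA`. -/
lemma hausdorffMeasure_circle_strip_le {u : EuclideanSpace ℝ (Fin 2)} (hu : ‖u‖ = 1)
    {A : ℝ} (hA : 0 ≤ A) :
    μH[1] {z : EuclideanSpace ℝ (Fin 2) | ‖z‖ = 1 ∧ |inner ℝ u z| ≤ A} ≤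
      ENNReal.ofReal (2 * Real.pi * A) := by
  have sq_add_sq {w : EuclideanSpace ℝ (Fin 2)} (hw : ‖w‖ = 1) : w 0 ^ 2 + w 1 ^ 2 = 1 := by
    have h := EuclideanSpace.real_norm_sq_eq w
    rw [hw, Fin.sum_univ_two] at h
    linarith
  have hu2 := sq_add_sq hu
  set a := Real.arcsin A with ha
  have ha0 : 0 ≤ a := Real.arcsin_nonneg.2 hA
  have hsub : {z : EuclideanSpace ℝ (Fin 2) | ‖z‖ = 1 ∧ |inner ℝ u z| ≤ A} ⊆
      circleParam u '' (Set.Icc (-a) a ∪ Set.Icc (Real.pi - a) (Real.pi + a)) := by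
    rintro z ⟨hz, hs⟩
    have hz2 := sq_add_sq hz
    have hinner : inner ℝ u z = u 0 * z 0 + u 1 * z 1 := by
      simp [PiLp.inner_apply, Fin.sum_univ_two, mul_comm]
    rw [hinner] at hs
    obtain ⟨s, hs_def⟩ : ∃ s, s = u 0 * z 0 + u 1 * z 1 := ⟨_, rfl⟩
    obtain ⟨c, hc_def⟩ : ∃ c, c = -u 1 * z 0 + u 0 * z 1 := ⟨_, rfl⟩
    rw [← hs_def] at hs
    have hsc : s ^ 2 + c ^ 2 = 1 := by
      calc s ^ 2 + c ^ 2 = (u 0 ^ 2 + u 1 ^ 2) * (z 0 ^ 2 + z 1 ^ 2) := by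
            rw [hs_def, hc_def]; ring
        _ = 1 := by rw [hu2, hz2, one_mul]
    have hs_sq : s ^ 2 ≤ 1 := by linarith [sq_nonneg c]
    obtain ⟨hs1, hs1'⟩ := abs_le.1 ((sq_le_one_iff_abs_le_one s).1 hs_sq)
    have hub : Real.arcsin s ≤ a := Real.arcsin_le_arcsin (abs_le.1 hs).2
    have hlb : -a ≤ Real.arcsin s := by
      rw [ha, ← Real.arcsin_neg]
      exact Real.arcsin_le_arcsin (abs_le.1 hs).1
    have hcirc {t : ℝ} (hsin : Real.sin t = s) (hcos : Real.cos t = c) :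
        circleParam u t = z := by
      ext i
      fin_cases i
      · simp only [circleParam, hsin, hcos, hs_def, hc_def]
        simp
        linear_combination z 0 * hu2
      · simp only [circleParam, hsin, hcos, hs_def, hc_def]
        simp
        linear_combination z 1 * hu2
    have hcos_arcsin : Real.cos (Real.arcsin s) = |c| := by
      rw [Real.cos_arcsin, show 1 - s ^ 2 = c ^ 2 by linarith, Real.sqrt_sq_eq_abs]
    rcases le_total 0 c with hc | hc
    · refine ⟨Real.arcsin s, Or.inl ⟨hlb, hub⟩, hcirc (Real.sin_arcsin hs1 hs1') ?_⟩
      rw [hcos_arcsin, abs_of_nonneg hc]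
    · refine ⟨Real.pi - Real.arcsin s, Or.inr ⟨by linarith, by linarith⟩, hcirc ?_ ?_⟩
      · rw [Real.sin_pi_sub, Real.sin_arcsin hs1 hs1']
      · rw [Real.cos_pi_sub, hcos_arcsin, abs_of_nonpos hc, neg_neg]
  calc _ ≤ μH[1] (circleParam u '' (Set.Icc (-a) a ∪ Set.Icc (Real.pi - a) (Real.pi + a))) :=
        measure_mono hsub
    _ ≤ μH[1] (Set.Icc (-a) a ∪ Set.Icc (Real.pi - a) (Real.pi + a)) := by
        simpa using (lipschitzWith_circleParam hu2).hausdorffMeasure_image_le zero_le_one _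
    _ = volume (Set.Icc (-a) a ∪ Set.Icc (Real.pi - a) (Real.pi + a)) := by
        rw [hausdorffMeasure_real]
    _ ≤ volume (Set.Icc (-a) a) + volume (Set.Icc (Real.pi - a) (Real.pi + a)) :=
        measure_union_le _ _
    _ = ENNReal.ofReal (4 * a) := by
        rw [Real.volume_Icc, Real.volume_Icc, ← ENNReal.ofReal_add (by linarith) (by linarith)]
        ring_nf
    _ ≤ ENNReal.ofReal (2 * Real.pi * A) := by
        apply ENNReal.ofReal_le_ofReal
        linarith [arcsin_le_half_pi_mul hA]

/-- First order Taylor estimate for a function with Hölder continuous derivative. -/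
lemma abs_sub_sub_fderiv_le_of_holder {F : Type*} [NormedAddCommGroup F] [NormedSpace ℝ F]
    {f : F → ℝ} (hf : Differentiable ℝ f) {K μ : ℝ} (hK : 0 ≤ K) (hμ : 0 ≤ μ)
    (hHolder : ∀ x y, ‖fderiv ℝ f x - fderiv ℝ f y‖ ≤ K * ‖x - y‖ ^ μ) (x y : F) :
    |f y - f x - fderiv ℝ f x (y - x)| ≤ K * ‖y - x‖ ^ μ * ‖y - x‖ := by
  rw [← Real.norm_eq_abs]
  refine (convex_closedBall x ‖y - x‖).norm_image_sub_le_of_norm_fderiv_le' (𝕜 := ℝ)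
    (fun w _ => hf w) (fun w hw => ?_) (Metric.mem_closedBall_self (norm_nonneg _))
    (mem_closedBall_iff_norm.2 le_rfl)
  refine (hHolder w x).trans ?_
  have := mem_closedBall_iff_norm.1 hw
  gcongr

/-- The Bertozzi–Constantin geometric lemma: near the boundary of a `C^{1,μ}` patch
`E = {φ > 0}`, the set `S_ρ(x₀)` of unit directions landing in `E` at distance `ρ` differs
from the half-circle `Σ(x₀)` determined by `∇φ` at the nearest boundary point by a set of
arclength at most `2π((1+2^μ)d(x₀)/ρ + 2^μ(ρ/δ)^μ)`, where `δ = (|∇φ|_inf/|∇φ|_μ)^{1/μ}`. -/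
theorem stmt_19 (μ : ℝ) (hμ : μ ∈ Set.Ioc (0:ℝ) 1)
    (φ : EuclideanSpace ℝ (Fin 2) → ℝ) (hφ : ContDiff ℝ 1 φ)
    (K : ℝ) (hK : 0 < K)
    (hHolder : ∀ x y : EuclideanSpace ℝ (Fin 2),
      ‖fderiv ℝ φ x - fderiv ℝ φ y‖ ≤ K * ‖x - y‖ ^ μ)
    (E : Set (EuclideanSpace ℝ (Fin 2))) (hE : E = {x | 0 < φ x})
    (hE_ne : E.Nonempty) (hE_bdd : Bornology.IsBounded E)
    (l : ℝ) (hl : 0 < l)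
    (hl_inf : ∀ x ∈ frontier E, l ≤ ‖fderiv ℝ φ x‖)
    (δ : ℝ) (hδ : δ = (l / K) ^ (1 / μ))
    (x₀ : EuclideanSpace ℝ (Fin 2)) (hx₀ : x₀ ∈ E)
    (d : ℝ) (hd : d = Metric.infDist x₀ (frontier E)) (hdδ : d < δ)
    (xt : EuclideanSpace ℝ (Fin 2)) (hxt : xt ∈ frontier E) (hxtd : dist x₀ xt = d) :
    ∀ ρ : ℝ, d ≤ ρ →
      μH[1] (symmDiff {z : EuclideanSpace ℝ (Fin 2) | ‖z‖ = 1 ∧ x₀ + ρ • z ∈ E}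
          {z : EuclideanSpace ℝ (Fin 2) | ‖z‖ = 1 ∧ 0 ≤ fderiv ℝ φ xt z}) ≤
        ENNReal.ofReal
          (2 * Real.pi * ((1 + 2 ^ μ) * d / ρ + 2 ^ μ * (ρ / δ) ^ μ)) := by
  intro ρ hρ
  obtain ⟨hμ0, -⟩ := hμ
  have hcont : Continuous φ := hφ.continuous
  have hφxt : φ xt = 0 := by
    rw [hE] at hxt
    exact (frontier_lt_subset_eq continuous_const hcont hxt).symm
  have hd0 : 0 < d := by
    rw [← hxtd, dist_pos]
    rintro rfl
    rw [hE] at hx₀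
    exact hx₀.ne' hφxt
  have hρ0 : 0 < ρ := hd0.trans_le hρ
  have hδ0 : 0 < δ := hd0.trans hdδ
  have hδμ : δ ^ μ = l / K := by
    rw [hδ, ← Real.rpow_mul (by positivity), one_div_mul_cancel hμ0.ne', Real.rpow_one]
  set A := (1 + 2 ^ μ) * d / ρ + 2 ^ μ * (ρ / δ) ^ μ with hA
  have hA0 : 0 ≤ A := by positivity
  set N := ‖fderiv ℝ φ xt‖ with hN
  have hlN : l ≤ N := hl_inf xt hxt
  have hN0 : 0 < N := hl.trans_le hlN
  set v := (InnerProductSpace.toDual ℝ (EuclideanSpace ℝ (Fin 2))).symm (fderiv ℝ φ xt) with hv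
  have hvN : ‖v‖ = N := LinearIsometryEquiv.norm_map _ _
  have hvz (z : EuclideanSpace ℝ (Fin 2)) : inner ℝ v z = fderiv ℝ φ xt z :=
    InnerProductSpace.toDual_symm_apply
  have hu : ‖N⁻¹ • v‖ = 1 := by
    rw [norm_smul, hvN, norm_inv, Real.norm_of_nonneg hN0.le, inv_mul_cancel₀ hN0.ne']
  refine (measure_mono fun z hz => ?_).trans (hausdorffMeasure_circle_strip_le hu hA0)
  have hz1 : ‖z‖ = 1 := by
    rcases hz with hz | hz <;> exact hz.1.1
  refine ⟨hz1, ?_⟩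
  rw [real_inner_smul_left, hvz, abs_mul, abs_of_pos (inv_pos.2 hN0), inv_mul_le_iff₀ hN0]
  -- For `δ ≤ ρ` the bound exceeds the length of the whole circle.
  rcases le_total δ ρ with hδρ | hρδ
  · have h1 : 1 ≤ A := by
      have h2 : (1 : ℝ) ≤ 2 ^ μ := Real.one_le_rpow (by norm_num) hμ0.le
      have h3 : 1 ≤ (ρ / δ) ^ μ := Real.one_le_rpow ((one_le_div hδ0).2 hδρ) hμ0.le
      have h4 : 0 ≤ (1 + 2 ^ μ) * d / ρ := by positivity
      nlinarith
    calc |fderiv ℝ φ xt z| ≤ N * ‖z‖ := (fderiv ℝ φ xt).le_opNorm z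
      _ ≤ N * A := by rw [hz1]; gcongr
  have hnorm : ‖x₀ + ρ • z - xt‖ ≤ ρ + d := by
    calc ‖x₀ + ρ • z - xt‖ = ‖ρ • z + (x₀ - xt)‖ := by congr 1; abel
      _ ≤ ‖ρ • z‖ + ‖x₀ - xt‖ := norm_add_le _ _
      _ = ρ + d := by
        rw [norm_smul, hz1, mul_one, Real.norm_of_nonneg hρ0.le, ← dist_eq_norm, hxtd]
  have hlin : fderiv ℝ φ xt (x₀ + ρ • z - xt) =
      ρ * fderiv ℝ φ xt z + fderiv ℝ φ xt (x₀ - xt) := by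
    rw [show x₀ + ρ • z - xt = ρ • z + (x₀ - xt) by abel, map_add, map_smul, smul_eq_mul]
  have hshift : |fderiv ℝ φ xt (x₀ - xt)| ≤ N * d := by
    rw [← hxtd, dist_eq_norm]
    exact (fderiv ℝ φ xt).le_opNorm _
  have hT := abs_sub_sub_fderiv_le_of_holder (hφ.differentiable one_ne_zero) hK.le hμ0.le
    hHolder xt (x₀ + ρ • z)
  rw [hφxt, sub_zero, hlin] at hT
  have hrem : K * ‖x₀ + ρ • z - xt‖ ^ μ * ‖x₀ + ρ • z - xt‖ ≤
      N * (2 ^ μ * (ρ / δ) ^ μ * (ρ + d)) := by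
    have hKl : K * ρ ^ μ = l * (ρ / δ) ^ μ := by
      rw [Real.div_rpow hρ0.le hδ0.le, hδμ]
      field_simp
    calc K * ‖x₀ + ρ • z - xt‖ ^ μ * ‖x₀ + ρ • z - xt‖ ≤ K * (2 * ρ) ^ μ * (ρ + d) := by
          gcongr
          linarith
      _ = l * (2 ^ μ * (ρ / δ) ^ μ * (ρ + d)) := by
          rw [Real.mul_rpow zero_le_two hρ0.le]
          linear_combination 2 ^ μ * (ρ + d) * hKl
      _ ≤ N * (2 ^ μ * (ρ / δ) ^ μ * (ρ + d)) := by gcongr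
  have hmain : ρ * |fderiv ℝ φ xt z| ≤ N * d + N * (2 ^ μ * (ρ / δ) ^ μ * (ρ + d)) := by
    obtain ⟨hT1, hT2⟩ := abs_le.1 (hT.trans hrem)
    obtain ⟨hs1, hs2⟩ := abs_le.1 hshift
    rw [hE] at hz
    rcases hz with ⟨⟨-, hpos⟩, hneg⟩ | ⟨⟨-, hpos⟩, hneg⟩
    · have hlt : fderiv ℝ φ xt z < 0 := not_le.1 fun h => hneg ⟨hz1, h⟩
      have hpos : 0 < φ (x₀ + ρ • z) := hpos
      rw [abs_of_neg hlt]
      linarith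
    · have hle : φ (x₀ + ρ • z) ≤ 0 := not_lt.1 fun h => hneg ⟨hz1, h⟩
      rw [abs_of_nonneg hpos]
      linarith
  have hq : (ρ / δ) ^ μ ≤ 1 :=
    Real.rpow_le_one (by positivity) ((div_le_one hδ0).2 hρδ) hμ0.le
  refine le_of_mul_le_mul_left (hmain.trans ?_) hρ0
  have hAρ : ρ * (N * A) = N * d + N * (2 ^ μ * d + 2 ^ μ * (ρ / δ) ^ μ * ρ) := by
    rw [hA]
    field_simp
    ring
  rw [hAρ]
  have hcross : 2 ^ μ * d * (ρ / δ) ^ μ ≤ 2 ^ μ * d := mul_le_of_le_one_right (by positivity) hq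
  gcongr
  linarith
end
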